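/- arXiv:2012.05793 — 8 statements merged into one kernel-verified Lean document; each statement's English description precedes it below -/
import Mathlib

section
/- Let K ⊆ ℝ^n be a nonempty compact set and let f, g be real polynomials in n variables with g(x) > 0 for every x ∈ K, and set ρ := min_{x∈K} f(x)/g(x). Then ρ equals the infimum, over all finite Borel measures μ supported in K satisfying ∫_K g dμ = 1, of ∫_K f dμ; moreover this infimum is attained. -/
/-!
The value `ρ = f(x₀)/g(x₀)` is reached by the Dirac mass
at the minimiser `x₀`, rescaled by `1/g(x₀)`. Conversely `ρ g ≤ f` on `K` because `g > 0` there, and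
integrating against `μ`, which is concentrated on `K`, gives `ρ = ρ ∫ g dμ ≤ ∫ f dμ`; polynomials are
`μ`-integrable since `K` is compact and `μ` is finite (`integrable_eval_of_compact`).
-/

open MeasureTheory MvPolynomial

theorem integrable_eval_of_compact {n : ℕ} {K : Set (Fin n → ℝ)} (hK : IsCompact K)
    (μ : Measure (Fin n → ℝ)) [IsFiniteMeasure μ] (hμ : μ Kᶜ = 0) (p : MvPolynomial (Fin n) ℝ) :
    Integrable (fun x => eval x p) μ := by
  have h : IntegrableOn (fun x => eval x p) K μ :=
    (MvPolynomial.continuous_eval p).continuousOn.integrableOn_compact hK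
  rwa [IntegrableOn, Measure.restrict_eq_self_of_ae_mem (mem_ae_iff.mpr hμ)] at h

/-- Let `K ⊆ ℝ^n` be a nonempty compact set and `f, g` real polynomials
with `g > 0` on `K`; let `ρ := min_{x ∈ K} f(x)/g(x)`. Then `ρ` is the least element
(infimum, attained) of the set of values `∫_K f dμ` over finite Borel measures `μ`
supported in `K` with `∫_K g dμ = 1`. -/
theorem stmt_0 (n : ℕ) (K : Set (Fin n → ℝ)) (hK : IsCompact K) (hKne : K.Nonempty)
    (f g : MvPolynomial (Fin n) ℝ) (hg : ∀ x ∈ K, 0 < eval x g)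
    (ρ : ℝ) (hρ : IsLeast ((fun x => eval x f / eval x g) '' K) ρ) :
    IsLeast {r : ℝ | ∃ μ : Measure (Fin n → ℝ), IsFiniteMeasure μ ∧ μ Kᶜ = 0 ∧
      (∫ x, eval x g ∂μ) = 1 ∧ r = ∫ x, eval x f ∂μ} ρ := by
  obtain ⟨⟨x₀, hx₀, hρx₀⟩, hmin⟩ := hρ
  have hg₀ := hg x₀ hx₀
  have hinv : 0 ≤ (eval x₀ g)⁻¹ := (inv_pos.mpr hg₀).le
  constructor
  · refine ⟨ENNReal.ofReal (eval x₀ g)⁻¹ • Measure.dirac x₀,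
      Measure.smul_finite _ ENNReal.ofReal_ne_top, ?_, ?_, ?_⟩
    · simp [Measure.dirac_apply' x₀ hK.measurableSet.compl, hx₀]
    · rw [integral_smul_measure, integral_dirac, ENNReal.toReal_ofReal hinv, smul_eq_mul,
        inv_mul_cancel₀ hg₀.ne']
    · rw [integral_smul_measure, integral_dirac, ENNReal.toReal_ofReal hinv, smul_eq_mul,
        ← hρx₀]
      exact div_eq_inv_mul _ _
  · rintro r ⟨μ, hfin, hμ, hμg, rfl⟩
    have hK_ae : ∀ᵐ x ∂μ, x ∈ K := mem_ae_iff.mpr hμ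
    calc ρ = ∫ x, ρ * eval x g ∂μ := by rw [integral_const_mul, hμg, mul_one]
      _ ≤ ∫ x, eval x f ∂μ := by
        refine integral_mono_ae ((integrable_eval_of_compact hK μ hμ g).const_mul ρ)
          (integrable_eval_of_compact hK μ hμ f) ?_
        filter_upwards [hK_ae] with x hx
        exact (le_div_iff₀ (hg x hx)).mp (hmin ⟨x, hx, rfl⟩)
end

section
/- Let K ⊆ [-1,1]^n be a compact set, let μ be a finite Borel measure on ℝ^n whose support is exactly K, and let h : ℝ^n → ℝ be continuous. Then h(x) ≥ 0 for all x ∈ K if and only if for every d ∈ ℕ the localizing matrix M_d(h μ) is positive semidefinite. -/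
/-!
The quadratic form of `M_d(h μ)` at a coefficient vector `c` is `∫ h p² dμ`, where
`p = ∑ c_α x^α` (`dotProduct_locMatFun`). If `h ≥ 0` on `K`, this is clearly nonnegative, since `μ`
is carried by `K`.

Conversely, every polynomial arises as such a `p` for `d` large (`exists_sum_eq_eval`), so positive
semidefiniteness of all the localizing matrices gives `∫ h p² dμ ≥ 0` for every polynomial `p`.
By Stone–Weierstrass polynomials are dense in `C(K, ℝ)`, and `g ↦ ∫ h g² dμ` is continuous for the
uniform norm, so `∫ h g² dμ ≥ 0` for every continuous `g` (`integral_mul_sq_nonneg`). For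
`g = max (-h) 0` the integrand is `-g³`, so `∫ g³ dμ ≤ 0` and `g = 0` almost everywhere. If `h` were
negative at a point of `K`, the open set `{h < 0}` would meet `K` and hence have positive measure,
a contradiction.
-/

open MeasureTheory MvPolynomial

/-- The degree-`d` localizing matrix of a function `h` with respect to a measure `μ` on `ℝ^n`:
rows and columns are indexed by multi-indices `α` with `αᵢ ≤ d` for all `i` (encoded as
`α : Fin n → Fin (d+1)`), and the `(α, β)` entry is `∫ h(x) x^{α+β} dμ(x)`. -/
noncomputable def locMatFun (n d : ℕ) (μ : Measure (Fin n → ℝ)) (h : (Fin n → ℝ) → ℝ) :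
    Matrix (Fin n → Fin (d + 1)) (Fin n → Fin (d + 1)) ℝ :=
  Matrix.of fun α β => ∫ x, h x * ∏ i, x i ^ ((α i : ℕ) + (β i : ℕ)) ∂μ

section Aux

variable {n : ℕ} {K : Set (Fin n → ℝ)} {μ : Measure (Fin n → ℝ)}

lemma restrict_eq_of_compl_null (hsupp : μ Kᶜ = 0) : μ.restrict K = μ :=
  Measure.restrict_eq_self_of_ae_mem (mem_ae_iff.2 hsupp)

lemma integrable_of_continuous [IsFiniteMeasure μ] (hK : IsCompact K) (hsupp : μ Kᶜ = 0)
    {f : (Fin n → ℝ) → ℝ} (hf : Continuous f) : Integrable f μ := by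
  have := hf.continuousOn.integrableOn_compact (μ := μ) hK
  rwa [IntegrableOn, restrict_eq_of_compl_null hsupp] at this

/-- The quadratic form of the localizing matrix integrates `h` against the square of the polynomial
with the given coefficients. -/
lemma dotProduct_locMatFun [IsFiniteMeasure μ] (hK : IsCompact K) (hsupp : μ Kᶜ = 0)
    {h : (Fin n → ℝ) → ℝ} (hcont : Continuous h) (d : ℕ) (c : (Fin n → Fin (d + 1)) → ℝ) :
    star c ⬝ᵥ (locMatFun n d μ h).mulVec c =
      ∫ x, h x * (∑ α, c α * ∏ i, x i ^ (α i : ℕ)) ^ 2 ∂μ := by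
  have expand : ∀ x : Fin n → ℝ, h x * (∑ α, c α * ∏ i, x i ^ (α i : ℕ)) ^ 2 =
      ∑ α, ∑ β, c α * ((h x * ∏ i, x i ^ ((α i : ℕ) + (β i : ℕ))) * c β) := by
    intro x
    rw [sq, Finset.sum_mul_sum, Finset.mul_sum]
    refine Finset.sum_congr rfl fun α _ => ?_
    rw [Finset.mul_sum]
    refine Finset.sum_congr rfl fun β _ => ?_
    simp only [pow_add, Finset.prod_mul_distrib]
    ring
  have hint : ∀ α β : Fin n → Fin (d + 1), Integrable
      (fun x => c α * ((h x * ∏ i, x i ^ ((α i : ℕ) + (β i : ℕ))) * c β)) μ := fun α β =>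
    integrable_of_continuous hK hsupp (by fun_prop)
  simp only [expand]
  rw [integral_finsetSum _ fun α _ => integrable_finsetSum _ fun β _ => hint α β]
  simp only [dotProduct, Matrix.mulVec, locMatFun, Matrix.of_apply, star_trivial]
  refine Finset.sum_congr rfl fun α _ => ?_
  rw [integral_finsetSum _ fun β _ => hint α β, Finset.mul_sum]
  refine Finset.sum_congr rfl fun β _ => ?_
  rw [integral_const_mul, integral_mul_const]

/-- Every polynomial is a combination of the monomials indexing a localizing matrix of large
enough degree; the total degree suffices. -/
lemma exists_sum_eq_eval (p : MvPolynomial (Fin n) ℝ) :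
    ∃ (d : ℕ) (c : (Fin n → Fin (d + 1)) → ℝ),
      ∀ x : Fin n → ℝ, ∑ α, c α * ∏ i, x i ^ (α i : ℕ) = eval x p := by
  have hle : ∀ m ∈ p.support, ∀ i, m i < p.totalDegree + 1 := fun m hm i =>
    Nat.lt_succ_of_le ((monomial_le_degreeOf i hm).trans (degreeOf_le_totalDegree p i))
  refine ⟨p.totalDegree,
    fun α => p.coeff (Finsupp.equivFunOnFinite.symm fun i => (α i : ℕ)), fun x => ?_⟩
  rw [eval_eq']
  symm
  refine Finset.sum_of_injOn (fun m i => Fin.ofNat (p.totalDegree + 1) (m i)) ?_ ?_ ?_ ?_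
  · intro m hm m' hm' hmm
    ext i
    have := congrArg Fin.val (congrFun hmm i)
    simpa [Fin.ofNat, Nat.mod_eq_of_lt (hle m hm i), Nat.mod_eq_of_lt (hle m' hm' i)] using this
  · intro m _
    simp
  · intro α _ hα
    have hc : p.coeff (Finsupp.equivFunOnFinite.symm fun i => (α i : ℕ)) = 0 := by
      by_contra hne
      refine hα ⟨_, Finset.mem_coe.2 (mem_support_iff.2 hne), ?_⟩
      ext i
      simp [Fin.ofNat, Nat.mod_eq_of_lt (α i).isLt]
    simp [hc]
  · intro m hm
    have hv : ∀ i, ((Fin.ofNat (p.totalDegree + 1) (m i) : Fin _) : ℕ) = m i := fun i =>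
      Nat.mod_eq_of_lt (hle m hm i)
    simp only [hv]
    congr 2
    ext i
    simp

lemma continuous_integral_continuousMap {X : Type*} [TopologicalSpace X] [CompactSpace X]
    [MeasurableSpace X] [OpensMeasurableSpace X] (ν : Measure X) [IsFiniteMeasure ν] :
    Continuous fun g : C(X, ℝ) => ∫ x, g x ∂ν := by
  have hint : ∀ g : C(X, ℝ), Integrable g ν := fun g =>
    g.continuous.integrable_of_hasCompactSupport (HasCompactSupport.of_compactSpace g)
  refine (LipschitzWith.of_dist_le_mul (K := (ν.real Set.univ).toNNReal) fun f g => ?_).continuous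
  rw [dist_eq_norm, ← integral_sub (hint f) (hint g), Real.coe_toNNReal _ measureReal_nonneg,
    dist_eq_norm, mul_comm]
  exact norm_integral_le_of_norm_le_const (.of_forall fun x => (f - g).norm_coe_le_norm x)

/-- Nonnegativity of `∫ h p² dμ` passes from polynomials to continuous functions, by the
Stone–Weierstrass theorem on `K`. -/
lemma integral_mul_sq_nonneg [IsFiniteMeasure μ] (hK : IsCompact K) (hsupp : μ Kᶜ = 0)
    {h : (Fin n → ℝ) → ℝ} (hcont : Continuous h)
    (hp : ∀ p : MvPolynomial (Fin n) ℝ, 0 ≤ ∫ x, h x * eval x p ^ 2 ∂μ)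
    {f : (Fin n → ℝ) → ℝ} (hf : Continuous f) : 0 ≤ ∫ x, h x * f x ^ 2 ∂μ := by
  have := isCompact_iff_compactSpace.1 hK
  let ν : Measure K := μ.comap Subtype.val
  have hν : ∀ u : (Fin n → ℝ) → ℝ, ∫ x : K, u x ∂ν = ∫ x, u x ∂μ := fun u => by
    rw [integral_subtype_comap hK.measurableSet, restrict_eq_of_compl_null hsupp]
  have : IsFiniteMeasure ν := ⟨by
    rw [Measure.comap_apply _ Subtype.val_injective
      (fun s hs => hK.measurableSet.subtype_image hs) _ MeasurableSet.univ]
    exact measure_lt_top μ _⟩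
  let H : C(K, ℝ) := ⟨fun x => h x, by fun_prop⟩
  let coord : Fin n → C(K, ℝ) := fun i => ⟨fun x => x.1 i, (continuous_apply i).comp continuous_subtype_val⟩
  let A : Subalgebra ℝ C(K, ℝ) := (aeval (R := ℝ) coord).range
  have happly : ∀ (p : MvPolynomial (Fin n) ℝ) (x : K), aeval coord p x = eval x.1 p := by
    intro p x
    induction p using MvPolynomial.induction_on with
    | C a => simp
    | add p q hp hq => simp [hp, hq]
    | mul_X p i hp => simp [hp, coord]
  have hsep : A.SeparatesPoints := by
    intro x y hxy
    obtain ⟨i, hi⟩ := Function.ne_iff.1 (Subtype.coe_injective.ne hxy)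
    exact ⟨_, ⟨coord i, ⟨X i, by simp⟩, rfl⟩, hi⟩
  have hclosed : IsClosed {g : C(K, ℝ) | 0 ≤ ∫ x, (H * g ^ 2) x ∂ν} :=
    isClosed_le continuous_const
      ((continuous_integral_continuousMap ν).comp (by fun_prop : Continuous fun g => H * g ^ 2))
  have hA : (A : Set C(K, ℝ)) ⊆ {g : C(K, ℝ) | 0 ≤ ∫ x, (H * g ^ 2) x ∂ν} := by
    rintro _ ⟨p, rfl⟩
    have := hp p
    rw [← hν] at this
    simpa [happly, H] using this
  let F : C(K, ℝ) := ⟨fun x => f x, by fun_prop⟩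
  have hF : F ∈ A.topologicalClosure := by
    rw [ContinuousMap.subalgebra_topologicalClosure_eq_top_of_separatesPoints A hsep]
    trivial
  have h0 : 0 ≤ ∫ x, (H * F ^ 2) x ∂ν := closure_minimal hA hclosed hF
  rw [← hν]
  simpa [H, F] using h0

end Aux

/-- Let `K ⊆ [-1,1]^n` be compact, let `μ` be a finite Borel measure on `ℝ^n`
whose support is exactly `K` (i.e. `μ(Kᶜ) = 0` and every open set meeting `K` has positive
`μ`-measure), and let `h : ℝ^n → ℝ` be continuous. Then `h ≥ 0` on `K` iff for every `d ∈ ℕ`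
the localizing matrix `M_d(h μ)` is positive semidefinite. -/
theorem stmt_3 (n : ℕ) (K : Set (Fin n → ℝ)) (hK : IsCompact K)
    (hKcube : K ⊆ Set.univ.pi fun _ => Set.Icc (-1 : ℝ) 1)
    (μ : Measure (Fin n → ℝ)) [IsFiniteMeasure μ]
    (hsupp : μ Kᶜ = 0)
    (hpos : ∀ U : Set (Fin n → ℝ), IsOpen U → (U ∩ K).Nonempty → 0 < μ U)
    (h : (Fin n → ℝ) → ℝ) (hcont : Continuous h) :
    (∀ x ∈ K, 0 ≤ h x) ↔ ∀ d : ℕ, (locMatFun n d μ h).PosSemidef := by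
  constructor
  · intro hnn d
    refine .of_dotProduct_mulVec_nonneg ?_ fun c => ?_
    · ext α β
      simp [locMatFun, add_comm]
    · rw [dotProduct_locMatFun hK hsupp hcont]
      refine integral_nonneg_of_ae ?_
      filter_upwards [mem_ae_iff.2 hsupp] with x hx
      exact mul_nonneg (hnn x hx) (sq_nonneg _)
  · intro hM x₀ hx₀
    by_contra! hneg
    have hp : ∀ p : MvPolynomial (Fin n) ℝ, 0 ≤ ∫ x, h x * eval x p ^ 2 ∂μ := fun p => by
      obtain ⟨d, c, hc⟩ := exists_sum_eq_eval p
      have := (hM d).dotProduct_mulVec_nonneg c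
      rw [dotProduct_locMatFun hK hsupp hcont] at this
      simpa only [hc] using this
    have hint := integral_mul_sq_nonneg hK hsupp hcont hp (f := fun x => max (-h x) 0)
      (by fun_prop)
    have hcube : ∀ x, h x * max (-h x) 0 ^ 2 = -(max (-h x) 0 ^ 3) := fun x => by
      rcases le_total (-h x) 0 with hx | hx
      · simp [max_eq_right hx]
      · rw [max_eq_left hx]; ring
    simp only [hcube, integral_neg] at hint
    have hnn : 0 ≤ fun x => max (-h x) 0 ^ 3 := fun x => pow_nonneg (le_max_right _ _) 3
    have hzero := (integral_eq_zero_iff_of_nonneg hnn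
      (integrable_of_continuous hK hsupp (by fun_prop))).1
      (le_antisymm (by linarith) (integral_nonneg hnn))
    refine (hpos {x | h x < 0} (isOpen_lt hcont continuous_const) ⟨x₀, hneg, hx₀⟩).ne' ?_
    refine measure_mono_null (fun x (hx : h x < 0) => ?_) (ae_iff.1 hzero)
    have : 0 < max (-h x) 0 := lt_max_of_lt_left (by linarith)
    exact (pow_pos this 3).ne'
end

section
/- Let K ⊆ ℝ^n be a nonempty compact set equal to the closure of its interior, let λ be the restriction of Lebesgue measure to K, and let f, g be real polynomials with g(x) > 0 on K; set ρ := min_{x∈K} f(x)/g(x). Define y^#_{i,j} := ∫_K f(x)^i g(x)^j dλ(x) for i,j ∈ ℕ, and for d ∈ ℕ let A_d and B_d be the real symmetric matrices indexed by pairs (i,j) with 0 ≤ i,j ≤ d, with entries A_d((i,j),(k,l)) := y^#_{i+k+1, j+l} and B_d((i,j),(k,l)) := y^#_{i+k, j+l+1}. Then for each d the set {a ∈ ℝ : A_d − a·B_d is positive semidefinite} is nonempty and bounded above; its supremum a_d^# satisfies a_d^# ≥ ρ; the sequence (a_d^#)_{d∈ℕ} is nonincreasing; and a_d^# → ρ as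 d → ∞. -/
/-!
Testing the pencil `A_d - a B_d` against a coefficient vector `v` gives
`∫_K (∑ v_{ij} f^i g^j)² (f - a g)` (`quadForm_eq_integral`). This is nonnegative for every `v` as
soon as `f - a g ≥ 0` on `K`, so `ρ` is always feasible; `v = e_{(0,0)}` gives the upper bound
`a ≤ ∫ f / ∫ g`; and `A_d - a B_d` is a principal submatrix of `A_{d+1} - a B_{d+1}`, whence
monotonicity.

For the limit, let `a > ρ`, so that `h = f - a g` is negative somewhere on `K`, and let `M > 0`
bound `|h|` on `K`. The test functions `(1 - h / M) ^ k` are polynomials in `f` and `g` of degree at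
most `k` in each (`exists_coeff_pow`). They are bounded by `1` where `h ≥ 0`, and grow
exponentially in `k` on a set `{h < -η}` of positive measure; this set has positive measure because
`K` is the closure of its interior. So `∫_K (1 - h / M)^{2k} h < 0` for large `k`
(`exists_integral_neg`), and `a` is infeasible for that `k`; so is every larger parameter, since
`g > 0` on `K`.
-/

open MeasureTheory MvPolynomial

/-- The powers of an affine form in two variables lie in the span of the monomials whose exponents
are both at most the power. -/
lemma exists_coeff_pow (c b a : ℝ) (k : ℕ) :
    ∃ v : Fin (k + 1) × Fin (k + 1) → ℝ, ∀ s t : ℝ,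
      ∑ p, v p * (s ^ (p.1 : ℕ) * t ^ (p.2 : ℕ)) = (c + b * s + a * t) ^ k := by
  refine ⟨fun p => (k.choose p.2 : ℝ) * a ^ (p.2 : ℕ) *
    (((k - p.2 : ℕ).choose p.1 : ℝ) * b ^ (p.1 : ℕ) * c ^ (k - p.2 - p.1 : ℕ)), fun s t => ?_⟩
  rw [Fintype.sum_prod_type_right]
  have hsum : (c + b * s + a * t) ^ k = ∑ j ∈ Finset.range (k + 1),
      ∑ i ∈ Finset.range (k + 1), (k.choose j : ℝ) * a ^ j *
        (((k - j).choose i : ℝ) * b ^ i * c ^ (k - j - i)) * (s ^ i * t ^ j) := by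
    rw [add_comm, add_pow]
    refine Finset.sum_congr rfl fun j _ => ?_
    rw [add_comm c, add_pow, Finset.mul_sum, Finset.sum_mul]
    -- The binomial coefficients vanish for `k - j < i ≤ k`.
    have hext := Finset.sum_subset (s₁ := Finset.range (k - j + 1)) (s₂ := Finset.range (k + 1))
      (f := fun i => (k.choose j : ℝ) * a ^ j *
        (((k - j).choose i : ℝ) * b ^ i * c ^ (k - j - i)) * (s ^ i * t ^ j))
      (fun x hx => by simp only [Finset.mem_range] at hx ⊢; omega)
      (fun x _ hx => by
        simp only [Finset.mem_range] at hx
        rw [Nat.choose_eq_zero_of_lt (by omega : k - j < x)]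
        simp)
    rw [← hext]
    refine Finset.sum_congr rfl fun i _ => ?_
    rw [mul_pow, mul_pow]
    ring
  rw [hsum, Finset.sum_range]
  refine Finset.sum_congr rfl fun j _ => ?_
  rw [Finset.sum_range]

/-- A quadratic form of the moment pencil is the integral of a square against `F - a G`. -/
lemma quadForm_eq_integral {X : Type*} [TopologicalSpace X] [MeasurableSpace X]
    [OpensMeasurableSpace X] [T2Space X] (μ : Measure X) [IsFiniteMeasureOnCompacts μ] {K : Set X}
    (hK : IsCompact K) {F G : X → ℝ} (hF : Continuous F) (hG : Continuous G) (y : ℕ → ℕ → ℝ)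
    (hy : ∀ i j, y i j = ∫ x in K, F x ^ i * G x ^ j ∂μ) {m : ℕ} (a : ℝ)
    (v : Fin m × Fin m → ℝ) :
    star v ⬝ᵥ (((Matrix.of fun p q : Fin m × Fin m =>
          y ((p.1 : ℕ) + (q.1 : ℕ) + 1) ((p.2 : ℕ) + (q.2 : ℕ))) -
       a • (Matrix.of fun p q : Fin m × Fin m =>
          y ((p.1 : ℕ) + (q.1 : ℕ)) ((p.2 : ℕ) + (q.2 : ℕ) + 1))).mulVec v) =
      ∫ x in K, (∑ p, v p * (F x ^ (p.1 : ℕ) * G x ^ (p.2 : ℕ))) ^ 2 * (F x - a * G x) ∂μ := by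
  have hint : ∀ {φ : X → ℝ}, Continuous φ → Integrable φ (μ.restrict K) :=
    fun hφ => hφ.continuousOn.integrableOn_compact hK
  have hentry : ∀ p q : Fin m × Fin m,
      v p * ((y ((p.1 : ℕ) + (q.1 : ℕ) + 1) ((p.2 : ℕ) + (q.2 : ℕ)) -
        a * y ((p.1 : ℕ) + (q.1 : ℕ)) ((p.2 : ℕ) + (q.2 : ℕ) + 1)) * v q) =
      ∫ x in K, (v p * (F x ^ (p.1 : ℕ) * G x ^ (p.2 : ℕ))) *
        (v q * (F x ^ (q.1 : ℕ) * G x ^ (q.2 : ℕ))) * (F x - a * G x) ∂μ := by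
    intro p q
    rw [hy, hy, ← integral_const_mul, ← integral_sub (hint (by fun_prop)) (hint (by fun_prop)),
      ← integral_mul_const, ← integral_const_mul]
    congr 1
    ext x
    ring
  calc _ = ∑ p, ∑ q, v p * ((y ((p.1 : ℕ) + (q.1 : ℕ) + 1) ((p.2 : ℕ) + (q.2 : ℕ)) -
        a * y ((p.1 : ℕ) + (q.1 : ℕ)) ((p.2 : ℕ) + (q.2 : ℕ) + 1)) * v q) := by
        simp [dotProduct, Matrix.mulVec, Finset.mul_sum]
    _ = _ := by
        simp_rw [hentry]
        have hinner : ∀ p : Fin m × Fin m, ∀ q ∈ Finset.univ, Integrable (fun x =>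
            (v p * (F x ^ (p.1 : ℕ) * G x ^ (p.2 : ℕ))) *
            (v q * (F x ^ (q.1 : ℕ) * G x ^ (q.2 : ℕ))) * (F x - a * G x)) (μ.restrict K) :=
          fun p q _ => hint (by fun_prop)
        rw [Finset.sum_congr rfl fun p _ => (integral_finsetSum _ (hinner p)).symm,
          ← integral_finsetSum _ fun p _ => integrable_finsetSum _ (hinner p)]
        congr 1
        ext x
        rw [sq, Finset.sum_mul_sum, Finset.sum_mul]
        refine Finset.sum_congr rfl fun p _ => ?_
        rw [Finset.sum_mul]

/-- If a continuous `h` is negative somewhere on a compact set that is the closure of its interior,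
then the weights `(1 - h / M) ^ (2 k)` eventually concentrate the integral of `h` on the region
where `h` is negative. -/
lemma exists_integral_neg {X : Type*} [TopologicalSpace X] [MeasurableSpace X]
    [OpensMeasurableSpace X] [T2Space X] (μ : Measure X) [IsFiniteMeasureOnCompacts μ]
    [μ.IsOpenPosMeasure] {K : Set X} (hK : IsCompact K) (hreg : K = closure (interior K))
    {h : X → ℝ} (hh : Continuous h) {x₀ : X} (hx₀ : x₀ ∈ K) (hneg : h x₀ < 0) :
    ∃ M : ℝ, ∃ k : ℕ, ∫ x in K, ((1 - h x / M) ^ k) ^ 2 * h x ∂μ < 0 := by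
  obtain ⟨M, hM0, hM⟩ : ∃ M : ℝ, 0 < M ∧ ∀ x ∈ K, h x ≤ M := by
    obtain ⟨C, hC⟩ := hK.bddAbove_image hh.continuousOn
    exact ⟨max C 1, by positivity, fun x hx =>
      (hC (Set.mem_image_of_mem h hx)).trans (le_max_left _ _)⟩
  obtain ⟨η, hη, hη'⟩ : ∃ η : ℝ, 0 < η ∧ h x₀ < -η := ⟨-h x₀ / 2, by linarith, by linarith⟩
  set V : Set X := {x | h x < -η} ∩ interior K with hV
  have hUo : IsOpen {x | h x < -η} := isOpen_lt hh continuous_const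
  have hVo : IsOpen V := hUo.inter isOpen_interior
  have hVne : V.Nonempty := mem_closure_iff.1 (hreg ▸ hx₀) _ hUo hη'
  have hVK : V ⊆ K := fun x hx => interior_subset hx.2
  have hVpos : 0 < μ.real V :=
    ENNReal.toReal_pos (hVo.measure_pos μ hVne).ne'
      ((measure_mono hVK).trans_lt hK.measure_lt_top).ne
  have hgrow : 1 < (1 + η / M) ^ 2 := one_lt_pow₀ (by linarith [div_pos hη hM0]) two_ne_zero
  obtain ⟨k, hk⟩ := ((tendsto_pow_atTop_atTop_of_one_lt hgrow).eventually_gt_atTop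
    (M * μ.real K / (η * μ.real V))).exists
  rw [div_lt_iff₀ (by positivity)] at hk
  refine ⟨M, k, ?_⟩
  have hVi : Integrable (V.indicator fun _ => ((1 + η / M) ^ 2) ^ k * η) (μ.restrict K) :=
    (continuous_const.continuousOn.integrableOn_compact hK).indicator hVo.measurableSet
  have hci : Integrable (fun _ : X => M) (μ.restrict K) :=
    continuous_const.continuousOn.integrableOn_compact hK
  calc ∫ x in K, ((1 - h x / M) ^ k) ^ 2 * h x ∂μ
      ≤ ∫ x in K, (M - V.indicator (fun _ => ((1 + η / M) ^ 2) ^ k * η) x) ∂μ := by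
        refine setIntegral_mono_on
          ((by fun_prop : Continuous fun x => ((1 - h x / M) ^ k) ^ 2 * h x).continuousOn
            |>.integrableOn_compact hK) (hci.sub hVi) hK.measurableSet fun x hx => ?_
        by_cases hxV : x ∈ V
        · rw [Set.indicator_of_mem hxV, ← pow_mul, ← pow_mul, mul_comm k 2]
          have hlt : h x < -η := hxV.1
          have hle : 1 + η / M ≤ 1 - h x / M := by
            have := div_le_div_of_nonneg_right hlt.le hM0.le
            rw [neg_div] at this
            linarith
          have hpow : (1 + η / M) ^ (2 * k) ≤ (1 - h x / M) ^ (2 * k) :=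
            pow_le_pow_left₀ (by positivity) hle _
          have hp0 : 0 < (1 + η / M) ^ (2 * k) := by positivity
          nlinarith
        · rw [Set.indicator_of_notMem hxV, sub_zero]
          rcases le_or_gt 0 (h x) with h0 | h0
          · have h1 : h x / M ≤ 1 := (div_le_one hM0).2 (hM x hx)
            have h2 : 0 ≤ h x / M := by positivity
            have h3 : ((1 - h x / M) ^ k) ^ 2 ≤ 1 :=
              pow_le_one₀ (pow_nonneg (by linarith) _) (pow_le_one₀ (by linarith) (by linarith))
            nlinarith [hM x hx]
          · nlinarith [sq_nonneg ((1 - h x / M) ^ k)]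
    _ = M * μ.real K - ((1 + η / M) ^ 2) ^ k * (η * μ.real V) := by
        rw [integral_sub hci hVi, integral_indicator_const _ hVo.measurableSet, setIntegral_const,
          measureReal_restrict_apply hVo.measurableSet, Set.inter_eq_left.2 hVK]
        simp only [smul_eq_mul]
        ring
    _ < 0 := by linarith

/-- Let `K ⊆ ℝ^n` be a nonempty compact set equal to the closure of its
interior, `λ` the restriction of Lebesgue measure to `K`, and `f, g` polynomials with
`g > 0` on `K`; set `ρ := min_K f/g`. With the pushforward moments
`y^#_{i,j} = ∫_K f^i g^j dλ` and the matrices `A_d((i,j),(k,l)) = y^#_{i+k+1,j+l}`,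
`B_d((i,j),(k,l)) = y^#_{i+k,j+l+1}` indexed by `0 ≤ i,j ≤ d`, the set
`{a : A_d − a B_d ⪰ 0}` is nonempty and bounded above, its supremum `a_d^#` satisfies
`a_d^# ≥ ρ`, the sequence is nonincreasing, and `a_d^# → ρ`. -/
theorem stmt_7 (n : ℕ) (K : Set (Fin n → ℝ)) (hK : IsCompact K) (hKne : K.Nonempty)
    (hreg : K = closure (interior K))
    (f g : MvPolynomial (Fin n) ℝ) (hg : ∀ x ∈ K, 0 < eval x g)
    (ρ : ℝ) (hρ : IsLeast ((fun x => eval x f / eval x g) '' K) ρ)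
    (y : ℕ → ℕ → ℝ)
    (hy : ∀ i j, y i j = ∫ x in K, (eval x f) ^ i * (eval x g) ^ j)
    (S : ℕ → Set ℝ)
    (hS : S = fun d => {a : ℝ |
      ((Matrix.of fun p q : Fin (d + 1) × Fin (d + 1) =>
          y ((p.1 : ℕ) + (q.1 : ℕ) + 1) ((p.2 : ℕ) + (q.2 : ℕ))) -
       a • (Matrix.of fun p q : Fin (d + 1) × Fin (d + 1) =>
          y ((p.1 : ℕ) + (q.1 : ℕ)) ((p.2 : ℕ) + (q.2 : ℕ) + 1))).PosSemidef}) :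
    (∀ d, (S d).Nonempty ∧ BddAbove (S d)) ∧
    (∀ d, ρ ≤ sSup (S d)) ∧
    (Antitone fun d => sSup (S d)) ∧
    Filter.Tendsto (fun d => sSup (S d)) Filter.atTop (nhds ρ) := by
  have hFc : Continuous fun x : Fin n → ℝ => eval x f := f.continuous_eval
  have hGc : Continuous fun x : Fin n → ℝ => eval x g := g.continuous_eval
  have hint : ∀ {φ : (Fin n → ℝ) → ℝ}, Continuous φ → IntegrableOn φ K :=
    fun hφ => hφ.continuousOn.integrableOn_compact hK
  have hquad := fun (d : ℕ) (a : ℝ) (v : Fin (d + 1) × Fin (d + 1) → ℝ) =>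
    quadForm_eq_integral volume hK hFc hGc y hy a v
  have hmem : ∀ d, ∀ a ∈ S d, ∀ v : Fin (d + 1) × Fin (d + 1) → ℝ,
      0 ≤ ∫ x in K, (∑ p, v p * ((eval x f) ^ (p.1 : ℕ) * (eval x g) ^ (p.2 : ℕ))) ^ 2 *
        (eval x f - a * eval x g) := by
    intro d a ha v
    rw [hS] at ha
    exact (ha.dotProduct_mulVec_nonneg v).trans_eq (hquad d a v)
  have hρS : ∀ d, ρ ∈ S d := by
    intro d
    rw [hS]
    refine Matrix.PosSemidef.of_dotProduct_mulVec_nonneg ?_ fun v => ?_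
    · ext p q
      simp [add_comm]
    · rw [hquad]
      refine setIntegral_nonneg hK.measurableSet fun x hx => mul_nonneg (sq_nonneg _) ?_
      have := hρ.2 (Set.mem_image_of_mem _ hx)
      simp only [le_div_iff₀ (hg x hx)] at this
      linarith
  have hKi : (interior K).Nonempty := by
    by_contra hempty
    rw [Set.not_nonempty_iff_eq_empty] at hempty
    rw [hempty, closure_empty] at hreg
    exact hKne.ne_empty hreg
  have hGpos : 0 < ∫ x in K, eval x g := by
    rw [setIntegral_pos_iff_support_of_nonneg_ae
      (ae_restrict_of_forall_mem hK.measurableSet fun x hx => (hg x hx).le) (hint hGc)]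
    exact (isOpen_interior.measure_pos volume hKi).trans_le (measure_mono fun x hx =>
      ⟨(hg x (interior_subset hx)).ne', interior_subset hx⟩)
  have hbdd : ∀ d, BddAbove (S d) := by
    refine fun d => ⟨(∫ x in K, eval x f) / ∫ x in K, eval x g, fun a ha => ?_⟩
    have h0 := hmem d a ha (Pi.single (0, 0) 1)
    simp only [Pi.single_apply, ite_mul, one_mul, zero_mul, Finset.sum_ite_eq', Finset.mem_univ,
      if_true, Fin.val_zero, pow_zero, mul_one, one_pow] at h0
    rw [integral_sub (hint hFc) (hint (by fun_prop)), integral_const_mul] at h0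
    rw [le_div_iff₀ hGpos]
    linarith
  have hanti : Antitone fun d => sSup (S d) := by
    refine antitone_nat_of_succ_le fun d => csSup_le_csSup (hbdd d) ⟨ρ, hρS _⟩ fun a ha => ?_
    rw [hS] at ha ⊢
    exact ha.submatrix (Prod.map Fin.castSucc Fin.castSucc)
  have hge : ∀ d, ρ ≤ sSup (S d) := fun d => le_csSup (hbdd d) (hρS d)
  refine ⟨fun d => ⟨⟨ρ, hρS d⟩, hbdd d⟩, hge, hanti, tendsto_order.2
    ⟨fun b hb => Filter.Eventually.of_forall fun d => hb.trans_le (hge d), fun b hb => ?_⟩⟩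
  obtain ⟨a, hρa, hab⟩ := exists_between hb
  obtain ⟨x₀, hx₀, hx₀ρ⟩ := hρ.1
  have hneg : eval x₀ f - a * eval x₀ g < 0 := by
    rw [← hx₀ρ] at hρa
    simp only [div_lt_iff₀ (hg x₀ hx₀)] at hρa
    linarith
  obtain ⟨M, k, hMk⟩ := exists_integral_neg volume hK hreg
    (by fun_prop : Continuous fun x : Fin n → ℝ => eval x f - a * eval x g) hx₀ hneg
  obtain ⟨v, hv⟩ := exists_coeff_pow 1 (-1 / M) (a / M) k
  have hbound : sSup (S k) ≤ a := by
    refine csSup_le ⟨ρ, hρS k⟩ fun a' ha' => ?_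
    by_contra! hlt
    refine absurd (hmem k a' ha' v) (not_le.2 (lt_of_le_of_lt ?_ hMk))
    refine setIntegral_mono_on (hint (by fun_prop)) (hint (by fun_prop)) hK.measurableSet
      fun x hx => ?_
    have hq : 1 + -1 / M * eval x f + a / M * eval x g =
        1 - (eval x f - a * eval x g) / M := by ring
    rw [hv, hq]
    have := mul_le_mul_of_nonneg_right hlt.le (hg x hx).le
    exact mul_le_mul_of_nonneg_left (by linarith) (sq_nonneg _)
  filter_upwards [Filter.eventually_ge_atTop k] with d hd
  exact ((hanti hd).trans hbound).trans_lt hab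
end

section
/- Let K ⊆ ℝ^n be a nonempty compact set equal to the closure of its interior, let λ be the restriction of Lebesgue measure to K, let f be a real polynomial, and let f* := min_{x∈K} f(x). Define y^#_k := ∫_K f(x)^k dλ(x) for k ∈ ℕ, and for d ∈ ℕ let H_d and H'_d be the real symmetric (d+1)×(d+1) Hankel matrices with entries H_d(i,j) := y^#_{i+j} and H'_d(i,j) := y^#_{i+j+1} for 0 ≤ i,j ≤ d. Then for each d the quantity a_d^# := sup{a ∈ ℝ : H'_d − a·H_d is positive semidefinite} is a well-defined real number (the set is nonempty and bounded above), a_d^# ≥ f*, the sequence (a_d^#)_{d∈ℕ} is nonincreasing, and a_d^# → f* as d → ∞. -/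
open MeasureTheory MvPolynomial

/-!
For a vector `v`, the quadratic form of `H'_d - a H_d` at `v` is `∫_K (f - a) p(f)²`, where `p` is
the polynomial with coefficients `v`. Hence `f* ∈ S d`, the sets `S d` decrease with `d`, and
`p = 1` bounds them above, because `K` has positive measure.

For the limit, let `c > f*`. It suffices to find one polynomial `p` with `∫_K (f - c) p(f)² < 0`:
then no `a ≥ c` lies in `S d` for `d ≥ deg p`. With `B` a strict upper bound of `f` on `K` and
`B > c`, the polynomial `p(t) = ((B - t) / (B - c))^N` is bounded by `1` in absolute value where
`c ≤ t < B` and is at least `ρ^N`, for some `ρ > 1`, where `t` is close to `f*`; since `f` is close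
to `f*` on a set of positive measure, a large `N` works (`exists_poly_neg`).
-/

/-- The Hankel form `vᵀ (H'_d - a H_d) v` as an integral against the underlying measure. -/
lemma hankel_form {X : Type*} [MeasurableSpace X] (μ : Measure X) (g : X → ℝ)
    (hint : ∀ k, Integrable (fun x => g x ^ k) μ) (y : ℕ → ℝ) (hy : ∀ k, y k = ∫ x, g x ^ k ∂μ)
    (d : ℕ) (a : ℝ) (v : Fin (d + 1) → ℝ) :
    v ⬝ᵥ (((Matrix.of fun i j : Fin (d + 1) => y ((i : ℕ) + (j : ℕ) + 1)) -
       a • (Matrix.of fun i j : Fin (d + 1) => y ((i : ℕ) + (j : ℕ)))).mulVec v) =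
    ∫ x, (g x - a) * (∑ i, v i * g x ^ (i : ℕ)) ^ 2 ∂μ := by
  have hexp : ∀ x, (g x - a) * (∑ i, v i * g x ^ (i : ℕ)) ^ 2 =
      ∑ i : Fin (d + 1), ∑ j : Fin (d + 1),
        (v i * v j * g x ^ ((i : ℕ) + j + 1) - v i * v j * a * g x ^ ((i : ℕ) + j)) := by
    intro x
    rw [sq, Finset.sum_mul_sum, Finset.mul_sum]
    refine Finset.sum_congr rfl fun i _ => ?_
    rw [Finset.mul_sum]
    refine Finset.sum_congr rfl fun j _ => ?_
    ring
  have hi : ∀ i j : Fin (d + 1), Integrable (fun x =>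
      v i * v j * g x ^ ((i : ℕ) + j + 1) - v i * v j * a * g x ^ ((i : ℕ) + j)) μ :=
    fun i j => ((hint _).const_mul _).sub ((hint _).const_mul _)
  simp_rw [hexp]
  rw [integral_finsetSum _ fun i _ => integrable_finsetSum _ fun j _ => hi i j]
  simp only [dotProduct, Matrix.mulVec, Finset.mul_sum]
  refine Finset.sum_congr rfl fun i _ => ?_
  rw [integral_finsetSum _ fun j _ => hi i j]
  refine Finset.sum_congr rfl fun j _ => ?_
  rw [integral_sub ((hint _).const_mul _) ((hint _).const_mul _), integral_const_mul,
    integral_const_mul, ← hy, ← hy]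
  simp only [Matrix.sub_apply, Matrix.smul_apply, Matrix.of_apply, smul_eq_mul]
  ring

/-- If `g` is bounded above and is below `c'` with positive measure, where `c' < c`, then
`(g - c) p(g)²` has negative integral for some polynomial `p`. -/
lemma exists_poly_neg {X : Type*} [MeasurableSpace X] (μ : Measure X) [IsFiniteMeasure μ]
    (g : X → ℝ) (c c' B : ℝ) (hc : c' < c) (hcB : c < B) (hB : ∀ᵐ x ∂μ, g x < B)
    (hmeas : MeasurableSet {x | g x < c'}) (hpos : μ {x | g x < c'} ≠ 0)
    (hint : ∀ p : Polynomial ℝ, Integrable (fun x => (g x - c) * p.eval (g x) ^ 2) μ) :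
    ∃ p : Polynomial ℝ, ∫ x, (g x - c) * p.eval (g x) ^ 2 ∂μ < 0 := by
  set A := {x | g x < c'} with hA
  set ρ := (B - c') / (B - c) with hρ
  have hBc : 0 < B - c := by linarith
  have hρ1 : 1 < ρ := by rw [hρ, one_lt_div hBc]; linarith
  have hm : 0 < (c - c') * μ.real A :=
    mul_pos (by linarith) (ENNReal.toReal_pos hpos (measure_ne_top _ _))
  -- `N` makes `(c - c') ρ^N μ(A)` exceed `(B - c) μ(X)`, the bound for the positive part.
  obtain ⟨N, hN⟩ := pow_unbounded_of_one_lt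
    ((B - c) * μ.real Set.univ / ((c - c') * μ.real A)) hρ1
  rw [div_lt_iff₀ hm] at hN
  refine ⟨(Polynomial.C (B - c)⁻¹ * (Polynomial.C B - Polynomial.X)) ^ N, ?_⟩
  set p := (Polynomial.C (B - c)⁻¹ * (Polynomial.C B - Polynomial.X)) ^ N with hp
  have hev : ∀ t, p.eval t = ((B - t) / (B - c)) ^ N := by
    intro t; simp [hp, div_eq_inv_mul]
  have hle : ∀ᵐ x ∂μ, (g x - c) * p.eval (g x) ^ 2 ≤
      (B - c) - A.indicator (fun _ => (c - c') * ρ ^ N) x := by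
    filter_upwards [hB] with x hx
    rw [hev]
    set r := (B - g x) / (B - c) with hr
    have hr0 : 0 ≤ r := div_nonneg (by linarith) hBc.le
    by_cases hxA : x ∈ A
    · rw [Set.indicator_of_mem hxA]
      have hxc : g x < c' := hxA
      have h1 : ρ ≤ r := by rw [hρ, hr]; gcongr
      have h2 : ρ ^ N ≤ r ^ N := by gcongr
      have h3 : 1 ≤ ρ ^ N := one_le_pow₀ hρ1.le
      have h4 : ρ ^ N ≤ (r ^ N) ^ 2 := by nlinarith
      have h5 : (c - c') * ρ ^ N ≤ (c - g x) * (r ^ N) ^ 2 := by gcongr; linarith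
      linarith
    · rw [Set.indicator_of_notMem hxA, sub_zero]
      rcases le_or_gt (g x) c with h | h
      · have := mul_nonneg (sub_nonneg.2 h) (sq_nonneg (r ^ N))
        linarith
      · have h1 : r ≤ 1 := by rw [hr, div_le_one hBc]; linarith
        have h2 : (r ^ N) ^ 2 ≤ 1 := pow_le_one₀ (by positivity) (pow_le_one₀ hr0 h1)
        nlinarith
  have hind : Integrable (A.indicator fun _ => (c - c') * ρ ^ N) μ :=
    (integrable_const _).indicator hmeas
  have := integral_mono_ae (hint p) ((integrable_const (B - c)).sub hind) hle
  refine this.trans_lt ?_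
  simp only [Pi.sub_apply]
  rw [integral_sub (integrable_const _) hind, integral_const, integral_indicator_const _ hmeas]
  simp only [smul_eq_mul]
  nlinarith

theorem stmt_8 (n : ℕ) (K : Set (Fin n → ℝ)) (hK : IsCompact K) (hKne : K.Nonempty)
    (hreg : K = closure (interior K))
    (f : MvPolynomial (Fin n) ℝ)
    (fstar : ℝ) (hfstar : IsLeast ((fun x => eval x f) '' K) fstar)
    (y : ℕ → ℝ) (hy : ∀ k, y k = ∫ x in K, (eval x f) ^ k)
    (S : ℕ → Set ℝ)
    (hS : S = fun d => {a : ℝ |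
      ((Matrix.of fun i j : Fin (d + 1) => y ((i : ℕ) + (j : ℕ) + 1)) -
       a • (Matrix.of fun i j : Fin (d + 1) => y ((i : ℕ) + (j : ℕ)))).PosSemidef}) :
    (∀ d, (S d).Nonempty ∧ BddAbove (S d)) ∧
    (∀ d, fstar ≤ sSup (S d)) ∧
    (Antitone fun d => sSup (S d)) ∧
    Filter.Tendsto (fun d => sSup (S d)) Filter.atTop (nhds fstar) := by
  set g : (Fin n → ℝ) → ℝ := fun x => eval x f with hg
  have hgc : Continuous g := MvPolynomial.continuous_eval f
  set μ : Measure (Fin n → ℝ) := volume.restrict K with hμ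
  have hfin : IsFiniteMeasure μ := ⟨by simpa [hμ] using hK.measure_lt_top⟩
  have hcint : ∀ F : (Fin n → ℝ) → ℝ, Continuous F → Integrable F μ :=
    fun F hF => hF.continuousOn.integrableOn_compact hK
  have hlow : ∀ᵐ x ∂μ, fstar ≤ g x :=
    ae_restrict_of_forall_mem hK.measurableSet fun x hx => hfstar.2 ⟨x, hx, rfl⟩
  have hform := hankel_form μ g (fun k => hcint _ (hgc.pow k)) y hy
  have hmem : ∀ d a, a ∈ S d ↔
      ∀ v : Fin (d + 1) → ℝ, 0 ≤ ∫ x, (g x - a) * (∑ i, v i * g x ^ (i : ℕ)) ^ 2 ∂μ := by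
    intro d a
    rw [hS]
    simp only [Set.mem_ofPred_eq, ← hform]
    constructor
    · intro h v
      simpa using h.dotProduct_mulVec_nonneg v
    · intro h
      refine Matrix.PosSemidef.of_dotProduct_mulVec_nonneg ?_ fun v => by simpa using h v
      ext i j
      simp [add_comm]
  -- Reindexing the form by polynomials of degree at most `d` makes monotonicity in `d` immediate.
  have hmemp : ∀ d a, a ∈ S d ↔
      ∀ p : Polynomial ℝ, p.natDegree ≤ d → 0 ≤ ∫ x, (g x - a) * p.eval (g x) ^ 2 ∂μ := by
    intro d a
    rw [hmem]
    constructor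
    · intro h p hp
      have := h fun i => p.coeff i
      simpa only [Polynomial.eval_eq_sum_range' (Nat.lt_succ_of_le hp), Finset.sum_range] using this
    · intro h v
      have := h (∑ i : Fin (d + 1), Polynomial.C (v i) * Polynomial.X ^ (i : ℕ))
        (Polynomial.natDegree_sum_le_of_forall_le _ _ fun i _ =>
          (Polynomial.natDegree_C_mul_X_pow_le _ _).trans (Nat.lt_succ_iff.1 i.2))
      simpa [Polynomial.eval_finsetSum] using this
  have hopen : ∀ c, fstar < c → μ {x | g x < c} ≠ 0 := by
    intro c hc
    have hU : IsOpen {x | g x < c} := isOpen_lt hgc continuous_const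
    obtain ⟨x₀, hx₀, hx₀f⟩ := hfstar.1
    have hx₀' : x₀ ∈ closure (interior K) := hreg ▸ hx₀
    have hne : ({x | g x < c} ∩ interior K).Nonempty :=
      mem_closure_iff.1 hx₀' _ hU (by change g x₀ < c; rw [← hx₀f] at hc; exact hc)
    rw [hμ, Measure.restrict_apply hU.measurableSet]
    exact ((hU.inter isOpen_interior).measure_pos volume hne).trans_le
      (measure_mono (Set.inter_subset_inter_right _ interior_subset)) |>.ne'
  have hfmem : ∀ d, fstar ∈ S d := fun d => (hmemp d fstar).2 fun p _ =>
    integral_nonneg_of_ae (hlow.mono fun x hx => mul_nonneg (sub_nonneg.2 hx) (sq_nonneg _))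
  have hpint : ∀ a (p : Polynomial ℝ), Integrable (fun x => (g x - a) * p.eval (g x) ^ 2) μ :=
    fun a p => hcint _ ((hgc.sub continuous_const).mul ((p.continuous.comp hgc).pow 2))
  have hbdd : ∀ d, BddAbove (S d) := by
    intro d
    have hpos : 0 < μ.real Set.univ := by
      refine ENNReal.toReal_pos (fun h => hopen (fstar + 1) (by linarith) ?_) (measure_ne_top _ _)
      exact measure_mono_null (Set.subset_univ _) h
    refine ⟨(∫ x, g x ∂μ) / μ.real Set.univ, fun a ha => ?_⟩
    have := (hmemp d a).1 ha 1 (by simp)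
    simp only [Polynomial.eval_one, one_pow, mul_one] at this
    rw [integral_sub (hcint _ hgc) (integrable_const _), integral_const, smul_eq_mul] at this
    rw [le_div_iff₀ hpos]
    linarith
  have hlb : ∀ d, fstar ≤ sSup (S d) := fun d => le_csSup (hbdd d) (hfmem d)
  refine ⟨fun d => ⟨⟨_, hfmem d⟩, hbdd d⟩, hlb, ?_, ?_⟩
  · intro d e hde
    exact csSup_le_csSup (hbdd d) ⟨_, hfmem e⟩ fun a ha =>
      (hmemp d a).2 fun p hp => (hmemp e a).1 ha p (hp.trans hde)
  · rw [tendsto_order]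
    refine ⟨fun b hb => Filter.Eventually.of_forall fun d => hb.trans_le (hlb d), fun b hb => ?_⟩
    obtain ⟨c, hc, hcb⟩ := exists_between hb
    obtain ⟨c', hc', hc'c⟩ := exists_between hc
    obtain ⟨M, hM⟩ := (hK.image hgc).bddAbove
    have hB : ∀ᵐ x ∂μ, g x < max M c + 1 :=
      ae_restrict_of_forall_mem hK.measurableSet fun x hx =>
        ((hM ⟨x, hx, rfl⟩).trans (le_max_left M c)).trans_lt (lt_add_one _)
    obtain ⟨p, hp⟩ := exists_poly_neg μ g c c' (max M c + 1) hc'c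
      ((le_max_right M c).trans_lt (lt_add_one _)) hB
      (isOpen_lt hgc continuous_const).measurableSet (hopen c' hc') (hpint c)
    filter_upwards [Filter.eventually_ge_atTop p.natDegree] with d hd
    refine lt_of_le_of_lt (csSup_le ⟨_, hfmem d⟩ fun a ha => ?_) hcb
    by_contra! hac
    refine absurd ((hmemp d a).1 ha p hd) (not_le.2 (lt_of_le_of_lt ?_ hp))
    exact integral_mono (hpint a p) (hpint c p) fun x =>
      mul_le_mul_of_nonneg_right (by linarith) (sq_nonneg _)
end

section
/- Let f be a real polynomial in n variables with global minimizer x* on the unit cube K = [-1,1]^n. Then there exists a constant C(f) > 0 (depending on f and n but not on d) such that for every integer d ≥ 1 there is an SOS polynomial σ^{(d)} of degree at most 2d satisfying ∫_K σ^{(d)}(x) dλ(x) = 1 and ∫_K f(x) σ^{(d)}(x) dλ(x) − f(x*) ≤ C(f)/d², where λ is Lebesgue measure restricted to K. -/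
/-!
The difference `f - f(x*)` is dominated on the cube by a separable function. Taylor's formula
(`taylor_bound`) gives `f x - f(x*) ≤ ∑ cᵢ (xᵢ - x*ᵢ) + M ∑ (xᵢ - x*ᵢ)²`, and `cᵢ = 0` whenever
`x*ᵢ` is interior (`partial_eq_zero`). So `f - f(x*)` is bounded by a combination of the gap
functions `(xᵢ - x*ᵢ)² / 2` for interior coordinates and `|xᵢ - x*ᵢ|` for boundary ones, and a
product `∏ hᵢ(xᵢ)²` of univariate densities reduces the claim to dimension one.

In dimension one, a squared polynomial of degree `O(m)` is needed under which the gap function has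
mean `O(1/m²)` (`univariate_density`). The gap function has the form `1 - G` with `G` a polynomial
of degree at most two. Take the Fejér-type kernel `p(t) = (1 - T_m(t)) / (1 - t)`, with `T_m` the
Chebyshev polynomial, and let the density be a multiple of `p(G)⁴`. Near the peak `p(G)` is of
order `m²`, and away from it `p(G) ≤ 2 / (1 - G)`; integrating the two bounds gives the rate.
-/


open MeasureTheory MvPolynomial

/-- A polynomial is a sum of squares of polynomials of degree at most `d`
(hence is an SOS polynomial of degree at most `2d`). -/
def IsSOSUpTo (n d : ℕ) (σ : MvPolynomial (Fin n) ℝ) : Prop :=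
  ∃ (m : ℕ) (h : Fin m → MvPolynomial (Fin n) ℝ),
    (∀ k, (h k).totalDegree ≤ d) ∧ σ = ∑ k, h k ^ 2

/-! ### The Chebyshev kernel -/

lemma abs_sin_natMul_le (m : ℕ) (x : ℝ) : |Real.sin (m * x)| ≤ m * |Real.sin x| := by
  induction m with
  | zero => simp
  | succ k ih =>
    have h : Real.sin ((k + 1 : ℕ) * x)
        = Real.sin (k * x) * Real.cos x + Real.cos (k * x) * Real.sin x := by
      rw [← Real.sin_add]; congr 1; push_cast; ring
    have h1 := abs_mul (Real.sin (k * x)) (Real.cos x)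
    have h2 := abs_mul (Real.cos (k * x)) (Real.sin x)
    have h3 := abs_add_le (Real.sin (k * x) * Real.cos x) (Real.cos (k * x) * Real.sin x)
    have h4 := mul_le_mul_of_nonneg_left (Real.abs_cos_le_one x) (abs_nonneg (Real.sin (k * x)))
    have h5 := mul_le_mul_of_nonneg_right (Real.abs_cos_le_one (k * x)) (abs_nonneg (Real.sin x))
    rw [h]; push_cast; linarith

/-- The kernel `p(t) = (1 - T_m(t)) / (1 - t)`, a polynomial of degree `m - 1`. With
`1 - s = cos 2φ` one has `p(1 - s) = (sin mφ / sin φ) ^ 2`, which gives all four bounds: `p` is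
of order `m ^ 2` for `1 - t ≤ 2 / m ^ 2` and decays like `2 / (1 - t)` beyond. The point
`s = 0` is left out, since the bounds come from dividing by `s`. -/
lemma exists_kernel (m : ℕ) (hm : 1 ≤ m) : ∃ p : Polynomial ℝ, p.natDegree ≤ m - 1 ∧
    ∀ s : ℝ, 0 < s → s ≤ 2 → 0 ≤ p.eval (1 - s) ∧ p.eval (1 - s) ≤ (m : ℝ) ^ 2 ∧
      s * p.eval (1 - s) ≤ 2 ∧ (s * (m : ℝ) ^ 2 ≤ 2 → (m : ℝ) ^ 2 / 4 ≤ p.eval (1 - s)) := by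
  set T := Polynomial.Chebyshev.T ℝ (m : ℤ) with hT
  have hroot : (T - Polynomial.C 1).IsRoot 1 := by
    simp [hT, Polynomial.IsRoot.def, Polynomial.Chebyshev.T_eval_one]
  have hq := Polynomial.mul_divByMonic_eq_iff_isRoot.2 hroot
  refine ⟨(T - Polynomial.C 1) /ₘ (Polynomial.X - Polynomial.C 1), ?_, ?_⟩
  · rw [Polynomial.natDegree_divByMonic _ (Polynomial.monic_X_sub_C 1),
      Polynomial.natDegree_X_sub_C, Polynomial.natDegree_sub_C, hT,
      Polynomial.Chebyshev.natDegree_T]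
    simp
  intro s hs0 hs2
  set p := (T - Polynomial.C 1) /ₘ (Polynomial.X - Polynomial.C 1)
  set v := p.eval (1 - s) with hv
  set φ := Real.arccos (1 - s) / 2 with hφ
  have hcos : Real.cos (2 * φ) = 1 - s := by
    rw [hφ, mul_div_cancel₀ _ two_ne_zero, Real.cos_arccos (by linarith) (by linarith)]
  have hφ0 : 0 ≤ φ := by have := Real.arccos_nonneg (1 - s); positivity
  have hφ1 : φ ≤ Real.pi / 2 := by have := Real.arccos_le_pi (1 - s); linarith
  have hsin : s = 2 * Real.sin φ ^ 2 := by
    have := Real.cos_two_mul φ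
    have := Real.sin_sq_add_cos_sq φ
    linarith
  have hTe : T.eval (1 - s) = 1 - 2 * Real.sin (m * φ) ^ 2 := by
    rw [← hcos, hT, Polynomial.Chebyshev.T_real_cos]
    have := Real.cos_two_mul (m * φ)
    have := Real.sin_sq_add_cos_sq (m * φ)
    have e : ((m : ℤ) : ℝ) * (2 * φ) = 2 * (m * φ) := by push_cast; ring
    rw [e]; linarith
  have hsv : s * v = 2 * Real.sin (m * φ) ^ 2 := by
    have := congrArg (Polynomial.eval (1 - s)) hq
    simp only [Polynomial.eval_mul, Polynomial.eval_sub, Polynomial.eval_X, Polynomial.eval_C,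
      hTe] at this
    rw [← hv] at this
    linarith
  have hS0 : 0 ≤ Real.sin φ := Real.sin_nonneg_of_nonneg_of_le_pi hφ0 (by linarith [Real.pi_pos])
  have hS : 0 < Real.sin φ := by
    rcases hS0.lt_or_eq with h | h
    · exact h
    · rw [← h] at hsin; norm_num at hsin; linarith
  have key : Real.sin φ ^ 2 * v = Real.sin (m * φ) ^ 2 := by rw [hsin] at hsv; linarith
  have hS2 : 0 < Real.sin φ ^ 2 := by positivity
  refine ⟨?_, ?_, ?_, ?_⟩
  · exact nonneg_of_mul_nonneg_right (by rw [hsv]; positivity) hs0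
  · refine le_of_mul_le_mul_left ?_ hS2
    rw [key, ← sq_abs, ← sq_abs (Real.sin φ), mul_comm (|Real.sin φ| ^ 2), ← mul_pow]
    exact pow_le_pow_left₀ (abs_nonneg _) (abs_sin_natMul_le m φ) 2
  · rw [hsv]; linarith [Real.sin_sq_le_one (m * φ)]
  · intro hsm
    have hm0 : (0 : ℝ) < m := by exact_mod_cast hm
    have h1 : m * Real.sin φ ≤ 1 := by
      refine (sq_le_one_iff₀ (by positivity)).1 ?_
      rw [hsin] at hsm
      nlinarith
    have h2 := Real.mul_le_sin hφ0 hφ1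
    have hpi := Real.pi_pos
    have h3 : m * φ ≤ Real.pi / 2 := by
      have : m * (2 / Real.pi * φ) ≤ 1 := (mul_le_mul_of_nonneg_left h2 hm0.le).trans h1
      have e : m * (2 / Real.pi * φ) = m * φ / (Real.pi / 2) := by field_simp
      rw [e, div_le_one (by positivity)] at this
      exact this
    have h4 := Real.mul_le_sin (by positivity) h3
    have h5 : (1 / 2 : ℝ) ≤ 2 / Real.pi := by
      rw [div_le_div_iff₀ two_pos hpi]; linarith [Real.pi_le_four]
    have h6 : 1 / 2 * (m * Real.sin φ) ≤ Real.sin (m * φ) := by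
      refine le_trans ?_ h4
      have := Real.sin_le hφ0
      gcongr
    refine le_of_mul_le_mul_left ?_ hS2
    rw [key]
    calc Real.sin φ ^ 2 * ((m : ℝ) ^ 2 / 4) = (1 / 2 * (m * Real.sin φ)) ^ 2 := by ring
      _ ≤ _ := by gcongr

/-- The fourth power of the kernel, weighted by `s`, is dominated by an integrable profile in the
rescaled variable `y`. In terms of `q = s * m ^ 2` and `w = v / m ^ 2` the bounds on `v` read
`w ≤ 1` and `q * w ≤ 2`, used for `q ≤ 1` and `q ≥ 1` respectively. -/
lemma kernel_pointwise {m s v y : ℝ} (hm : 1 ≤ m) (hs : 0 < s) (hv0 : 0 ≤ v) (hv1 : v ≤ m ^ 2)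
    (hv2 : s * v ≤ 2) (hy : y ^ 2 ≤ 2 * (s * m ^ 2 + (s * m ^ 2) ^ 2)) :
    s * v ^ 4 ≤ 80 * m ^ 6 * (1 + y ^ 2)⁻¹ := by
  have hm0 : 0 < m := by linarith
  rw [← div_eq_mul_inv, le_div_iff₀ (by positivity)]
  obtain ⟨w, hw⟩ : ∃ w, w = v / m ^ 2 := ⟨_, rfl⟩
  obtain ⟨q, hq⟩ : ∃ q, q = s * m ^ 2 := ⟨_, rfl⟩
  have hvw : v = w * m ^ 2 := by rw [hw]; field_simp
  have hw0 : 0 ≤ w := by rw [hw]; positivity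
  have hw1 : w ≤ 1 := by rw [hw]; exact div_le_one_of_le₀ hv1 (by positivity)
  have hq0 : 0 < q := by rw [hq]; positivity
  have hqw : q * w ≤ 2 := by rw [hq]; calc _ = s * v := by rw [hvw]; ring
                            _ ≤ 2 := hv2
  rw [← hq] at hy
  have main : q * w ^ 4 * (1 + 2 * (q + q ^ 2)) ≤ 80 := by
    rcases le_total q 1 with h | h
    · have : w ^ 4 ≤ 1 := pow_le_one₀ hw0 hw1
      have h1 : q * w ^ 4 ≤ 1 := mul_le_one₀ h (by positivity) this
      have h2 : 1 + 2 * (q + q ^ 2) ≤ 5 := by nlinarith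
      calc _ ≤ 1 * (5 : ℝ) := by gcongr
        _ ≤ 80 := by norm_num
    · have h2 : 1 + 2 * (q + q ^ 2) ≤ 5 * q ^ 2 := by nlinarith
      have h3 : q ^ 3 * w ^ 4 ≤ 8 := by
        calc _ = (q * w) ^ 3 * w := by ring
          _ ≤ 2 ^ 3 * 1 := by gcongr
          _ = 8 := by norm_num
      calc _ ≤ q * w ^ 4 * (5 * q ^ 2) := by gcongr
        _ = 5 * (q ^ 3 * w ^ 4) := by ring
        _ ≤ 80 := by linarith
  calc s * v ^ 4 * (1 + y ^ 2) = m ^ 6 * (q * w ^ 4 * (1 + y ^ 2)) := by rw [hvw, hq]; ring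
    _ ≤ m ^ 6 * (q * w ^ 4 * (1 + 2 * (q + q ^ 2))) := by gcongr
    _ ≤ m ^ 6 * 80 := by gcongr
    _ = _ := by ring

/-! ### Univariate densities -/

/-- A squared polynomial density on `[-1, 1]` concentrated at `a`, obtained by normalising the
fourth power of `p ∘ G`, where `p` is the kernel of `exists_kernel`. The gap `1 - G` can
vanish at `a` only and measures the distance to `a`, while `1 / N` is the width of the
peak of `p ∘ G`: `h1` says that the peak is at least this wide, `h2` that it decays at this
scale. Hence `∫ (p ∘ G) ^ 4` is at least of order `m ^ 8 / N` and `∫ (1 - G) (p ∘ G) ^ 4` at most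
of order `m ^ 6 / N`; the ratio does not depend on `N`. -/
lemma univariate_density (a : ℝ) (ha : a ∈ Set.Icc (-1 : ℝ) 1) (G : Polynomial ℝ)
    (hdeg : G.natDegree ≤ 2) (hG : ∀ x ∈ Set.Icc (-1 : ℝ) 1, 0 ≤ 1 - G.eval x ∧ 1 - G.eval x ≤ 2)
    (hG0 : ∀ x ∈ Set.Icc (-1 : ℝ) 1, x ≠ a → 1 - G.eval x ≠ 0)
    (m : ℕ) (hm : 1 ≤ m) (N : ℝ) (hN : 1 ≤ N)
    (h1 : ∀ x ∈ Set.Icc (-1 : ℝ) 1, N * |x - a| ≤ 1 → (1 - G.eval x) * (m : ℝ) ^ 2 ≤ 2)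
    (h2 : ∀ x ∈ Set.Icc (-1 : ℝ) 1, (N * (x - a)) ^ 2 ≤
      2 * ((1 - G.eval x) * (m : ℝ) ^ 2 + ((1 - G.eval x) * (m : ℝ) ^ 2) ^ 2)) :
    ∃ h : Polynomial ℝ, h.natDegree ≤ 4 * (m - 1) ∧
      ∫ x in Set.Icc (-1 : ℝ) 1, h.eval x ^ 2 = 1 ∧
      ∫ x in Set.Icc (-1 : ℝ) 1, (1 - G.eval x) * h.eval x ^ 2
        ≤ 20480 * Real.pi / (m : ℝ) ^ 2 := by
  obtain ⟨p, hpd, hp⟩ := exists_kernel m hm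
  have hmR : (1 : ℝ) ≤ m := by exact_mod_cast hm
  have hm0 : (0 : ℝ) < m := by linarith
  have hN0 : 0 < N := by linarith
  set r := p.comp G with hr
  have hre : ∀ x, r.eval x = p.eval (1 - (1 - G.eval x)) := by
    intro x; rw [hr, Polynomial.eval_comp]; congr 1; ring
  set K := Set.Icc (-1 : ℝ) 1 with hK
  have hinteg : ∀ q : ℝ → ℝ, Continuous q → IntegrableOn q K := fun q hq =>
    hq.continuousOn.integrableOn_compact isCompact_Icc
  set A := ∫ x in K, r.eval x ^ 4 with hA
  set B := ∫ x in K, (1 - G.eval x) * r.eval x ^ 4 with hB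
  have hAlow : (m : ℝ) ^ 8 / 256 / N ≤ A := by
    have hgood : ∀ x ∈ K, x ≠ a → N * |x - a| ≤ 1 → (m : ℝ) ^ 8 / 256 ≤ r.eval x ^ 4 := by
      intro x hx hxa hxN
      have h := (hp (1 - G.eval x) (lt_of_le_of_ne (hG x hx).1 (hG0 x hx hxa).symm)
        (hG x hx).2).2.2.2 (h1 x hx hxN)
      rw [← hre] at h
      calc (m : ℝ) ^ 8 / 256 = ((m : ℝ) ^ 2 / 4) ^ 4 := by ring
        _ ≤ _ := by gcongr
    have hNi : 1 / N ≤ 1 := by rw [div_le_one hN0]; exact hN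
    -- one of the two one-sided neighbourhoods of `a` of length `1 / N` lies inside the interval
    obtain ⟨b, hbK, hb⟩ : ∃ b, Set.Ioo b (b + 1 / N) ⊆ K ∧
        ∀ x ∈ Set.Ioo b (b + 1 / N), x ≠ a ∧ |x - a| ≤ 1 / N := by
      rcases le_total a 0 with h | h
      · refine ⟨a, fun x hx => ⟨?_, ?_⟩, fun x hx => ⟨hx.1.ne', ?_⟩⟩
        · linarith [hx.1, ha.1]
        · linarith [hx.2]
        · rw [abs_le]; constructor <;> linarith [hx.1, hx.2]
      · refine ⟨a - 1 / N, fun x hx => ⟨?_, ?_⟩, fun x hx => ⟨?_, ?_⟩⟩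
        · linarith [hx.1]
        · linarith [hx.2, ha.2]
        · have := hx.2; intro h'; linarith
        · rw [abs_le]; constructor <;> linarith [hx.1, hx.2]
    have hi := hinteg (fun x => r.eval x ^ 4) (by fun_prop)
    have hle := setIntegral_ge_of_const_le (μ := volume) (c := (m : ℝ) ^ 8 / 256)
      (f := fun x => r.eval x ^ 4)
      (measurableSet_Ioo (a := b) (b := b + 1 / N)) (by simp) (fun x hx => hgood x (hbK hx) (hb x hx).1
        (by have := (hb x hx).2; rwa [le_div_iff₀' hN0] at this)) (hi.mono_set hbK)
    have hvol : volume.real (Set.Ioo b (b + 1 / N)) = 1 / N := by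
      rw [Real.volume_real_Ioo_of_le (by have := one_div_pos.2 hN0; linarith)]; ring
    rw [hvol] at hle
    calc (m : ℝ) ^ 8 / 256 / N = (1 / N) • ((m : ℝ) ^ 8 / 256) := by rw [smul_eq_mul]; ring
      _ ≤ _ := hle
      _ ≤ A := setIntegral_mono_set hi (Filter.Eventually.of_forall fun x => by
          simp only [Pi.zero_apply]; positivity) hbK.eventuallyLE
  have hBup : B ≤ 80 * (m : ℝ) ^ 6 * (Real.pi / N) := by
    have hpt : ∀ x ∈ K, (1 - G.eval x) * r.eval x ^ 4
        ≤ 80 * (m : ℝ) ^ 6 * (1 + (N * (x - a)) ^ 2)⁻¹ := by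
      intro x hx
      rcases (hG x hx).1.eq_or_lt with h | h
      · rw [← h, zero_mul]; positivity
      · obtain ⟨e1, e2, e3, -⟩ := hp _ h (hG x hx).2
        rw [← hre] at e1 e2 e3
        exact kernel_pointwise hmR h e1 e2 e3 (h2 x hx)
    have hI : Integrable (fun x : ℝ => (1 + (N * (x - a)) ^ 2)⁻¹) :=
      (integrable_inv_one_add_sq.comp_mul_left' hN0.ne').comp_sub_right a
    have hval : ∫ x : ℝ, (1 + (N * (x - a)) ^ 2)⁻¹ = Real.pi / N := by
      rw [integral_sub_right_eq_self (fun x : ℝ => (1 + (N * x) ^ 2)⁻¹) a,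
        Measure.integral_comp_mul_left (fun x : ℝ => (1 + x ^ 2)⁻¹) N,
        integral_univ_inv_one_add_sq, smul_eq_mul, abs_of_pos (inv_pos.2 hN0)]
      ring
    calc B ≤ ∫ x in K, 80 * (m : ℝ) ^ 6 * (1 + (N * (x - a)) ^ 2)⁻¹ :=
          setIntegral_mono_on (hinteg _ (by fun_prop)) (hI.const_mul _).integrableOn
            measurableSet_Icc hpt
      _ ≤ ∫ x, 80 * (m : ℝ) ^ 6 * (1 + (N * (x - a)) ^ 2)⁻¹ :=
          setIntegral_le_integral (hI.const_mul _)
            (Filter.Eventually.of_forall fun x => by simp only [Pi.zero_apply]; positivity)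
      _ = _ := by rw [integral_const_mul, hval]
  have hA0 : 0 < A := lt_of_lt_of_le (by positivity) hAlow
  have hnorm : ∀ x, (Polynomial.C (Real.sqrt A)⁻¹ * r ^ 2).eval x ^ 2 = A⁻¹ * r.eval x ^ 4 := by
    intro x
    rw [Polynomial.eval_mul, Polynomial.eval_C, Polynomial.eval_pow, mul_pow, inv_pow,
      Real.sq_sqrt hA0.le]
    ring
  refine ⟨Polynomial.C (Real.sqrt A)⁻¹ * r ^ 2, ?_, ?_, ?_⟩
  · refine (Polynomial.natDegree_C_mul_le _ _).trans (Polynomial.natDegree_pow_le.trans ?_)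
    have : r.natDegree ≤ (m - 1) * 2 :=
      Polynomial.natDegree_comp_le.trans (Nat.mul_le_mul hpd hdeg)
    omega
  · simp_rw [hnorm]
    rw [integral_const_mul, ← hA, inv_mul_cancel₀ hA0.ne']
  · have e : ∀ x, (1 - G.eval x) * (A⁻¹ * r.eval x ^ 4)
        = A⁻¹ * ((1 - G.eval x) * r.eval x ^ 4) := fun x => by ring
    simp_rw [hnorm, e]
    rw [integral_const_mul, ← hB, inv_mul_le_iff₀ hA0]
    calc B ≤ 80 * (m : ℝ) ^ 6 * (Real.pi / N) := hBup
      _ = (m : ℝ) ^ 8 / 256 / N * (20480 * Real.pi / (m : ℝ) ^ 2) := by field_simp; norm_num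
      _ ≤ _ := by have := Real.pi_pos; gcongr

/-- For every `a ∈ [-1, 1]` there is a gap function `1 - G` with `G` quadratic at most, whose mean
under suitable squared polynomial densities is `O(1 / m ^ 2)`. At an interior point
`1 - G = (x - a) ^ 2 / 2`, and the peak has width of order `1 / m`; at an endpoint
`1 - G = |x - a|`, a polynomial on `[-1, 1]`, and the peak has width of order `1 / m ^ 2`. -/
lemma coordinate_density (a : ℝ) (ha : a ∈ Set.Icc (-1 : ℝ) 1) : ∃ G : Polynomial ℝ,
    (∀ x ∈ Set.Icc (-1 : ℝ) 1, (x - a) ^ 2 ≤ 2 * (1 - G.eval x) ∧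
      (a ∈ Set.Ioo (-1 : ℝ) 1 ∨ |x - a| ≤ 1 - G.eval x)) ∧
    ∀ m : ℕ, 1 ≤ m → ∃ h : Polynomial ℝ, h.natDegree ≤ 4 * (m - 1) ∧
      ∫ x in Set.Icc (-1 : ℝ) 1, h.eval x ^ 2 = 1 ∧
      ∫ x in Set.Icc (-1 : ℝ) 1, (1 - G.eval x) * h.eval x ^ 2
        ≤ 20480 * Real.pi / (m : ℝ) ^ 2 := by
  by_cases hinteg : a ∈ Set.Ioo (-1 : ℝ) 1
  · have he : ∀ x, 1 - (1 - Polynomial.C (1 / 2 : ℝ) * (Polynomial.X - Polynomial.C a) ^ 2).eval x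
        = (x - a) ^ 2 / 2 := by intro x; simp; ring
    refine ⟨1 - Polynomial.C (1 / 2 : ℝ) * (Polynomial.X - Polynomial.C a) ^ 2, ?_, ?_⟩
    · intro x _
      rw [he]
      exact ⟨by linarith, Or.inl hinteg⟩
    · intro m hm
      have hmR : (1 : ℝ) ≤ m := by exact_mod_cast hm
      refine univariate_density a ha _ ?_ ?_ ?_ m hm m hmR ?_ ?_
      · compute_degree
      · intro x hx
        rw [he]
        exact ⟨by positivity, by nlinarith [hx.1, hx.2, hinteg.1, hinteg.2]⟩
      · intro x _ hxa
        rw [he]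
        have := sub_ne_zero.2 hxa
        positivity
      · intro x _ hxm
        rw [he]
        have h0 : (m * |x - a|) ^ 2 ≤ 1 := pow_le_one₀ (by positivity) hxm
        rw [mul_pow, sq_abs] at h0
        linarith
      · intro x _
        rw [he]
        nlinarith [sq_nonneg ((x - a) ^ 2 / 2 * (m : ℝ) ^ 2)]
  · have ha2 : a = -1 ∨ a = 1 := by
      by_contra! h
      exact hinteg ⟨lt_of_le_of_ne ha.1 h.1.symm, lt_of_le_of_ne ha.2 h.2⟩
    have he : ∀ x ∈ Set.Icc (-1 : ℝ) 1,
        1 - (Polynomial.C a * Polynomial.X).eval x = |x - a| := by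
      intro x hx
      rcases ha2 with rfl | rfl
      · rw [abs_of_nonneg (by linarith [hx.1])]; simp; ring
      · rw [abs_of_nonpos (by linarith [hx.2])]; simp
    have hb : ∀ x ∈ Set.Icc (-1 : ℝ) 1, |x - a| ≤ 2 := by
      intro x hx
      rw [abs_le]
      constructor <;> linarith [hx.1, hx.2, ha.1, ha.2]
    refine ⟨Polynomial.C a * Polynomial.X, ?_, ?_⟩
    · intro x hx
      rw [he x hx, ← sq_abs]
      exact ⟨by nlinarith [hb x hx, abs_nonneg (x - a)], Or.inr le_rfl⟩
    · intro m hm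
      have hmR : (1 : ℝ) ≤ m := by exact_mod_cast hm
      refine univariate_density a ha _ ?_ ?_ ?_ m hm ((m : ℝ) ^ 2) (one_le_pow₀ hmR) ?_ ?_
      · exact (Polynomial.natDegree_C_mul_le _ _).trans (by simp)
      · intro x hx
        rw [he x hx]
        exact ⟨abs_nonneg _, hb x hx⟩
      · intro x hx hxa
        rw [he x hx]
        exact abs_ne_zero.2 (sub_ne_zero.2 hxa)
      · intro x hx hxm
        rw [he x hx]
        linarith
      · intro x hx
        rw [he x hx, mul_pow, ← sq_abs (x - a)]
        have : 0 ≤ |x - a| * (m : ℝ) ^ 2 := by positivity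
        nlinarith [sq_nonneg (|x - a| * (m : ℝ) ^ 2)]

/-! ### Local behaviour at the minimizer -/

/-- First-order Taylor expansion at `a` on the cube; `c` plays the role of the gradient. -/
lemma taylor_bound {n : ℕ} (a : Fin n → ℝ) (f : MvPolynomial (Fin n) ℝ) :
    ∃ (c : Fin n → ℝ) (M : ℝ), 0 ≤ M ∧
      ∀ x ∈ Set.univ.pi fun _ : Fin n => Set.Icc (-1 : ℝ) 1,
        |eval x f - eval a f - ∑ i, c i * (x i - a i)| ≤ M * ∑ i, (x i - a i) ^ 2 := by
  induction f using MvPolynomial.induction_on with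
  | C r => exact ⟨0, 0, le_rfl, fun x _ => by simp⟩
  | add p q hp hq =>
    obtain ⟨c, M, hM, h⟩ := hp
    obtain ⟨c', M', hM', h'⟩ := hq
    refine ⟨c + c', M + M', by positivity, fun x hx => ?_⟩
    have e : eval x (p + q) - eval a (p + q) - ∑ i, (c + c') i * (x i - a i)
        = (eval x p - eval a p - ∑ i, c i * (x i - a i))
          + (eval x q - eval a q - ∑ i, c' i * (x i - a i)) := by
      simp only [map_add, Pi.add_apply, add_mul, Finset.sum_add_distrib]; ring
    rw [e, add_mul]
    exact (abs_add_le _ _).trans (add_le_add (h x hx) (h' x hx))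
  | mul_X p j hp =>
    obtain ⟨c, M, hM, h⟩ := hp
    refine ⟨fun i => c i * a j + (if i = j then eval a p else 0), M + ∑ i, |c i|,
      by positivity, fun x hx => ?_⟩
    have e : eval x (p * X j) - eval a (p * X j)
          - ∑ i, (c i * a j + (if i = j then eval a p else 0)) * (x i - a i)
        = x j * (eval x p - eval a p - ∑ i, c i * (x i - a i))
          + ∑ i, c i * ((x i - a i) * (x j - a j)) := by
      have e1 : ∑ i, (c i * a j + (if i = j then eval a p else 0)) * (x i - a i)
          = a j * ∑ i, c i * (x i - a i) + eval a p * (x j - a j) := by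
        simp only [add_mul, Finset.sum_add_distrib, ite_mul, zero_mul, Finset.sum_ite_eq',
          Finset.mem_univ, if_true, Finset.mul_sum]
        congr 1
        exact Finset.sum_congr rfl fun i _ => by ring
      have e2 : ∑ i, c i * ((x i - a i) * (x j - a j))
          = (x j - a j) * ∑ i, c i * (x i - a i) := by
        rw [Finset.mul_sum]; exact Finset.sum_congr rfl fun i _ => by ring
      rw [e1, e2]; simp only [map_mul, eval_X]; ring
    have hxj : |x j| ≤ 1 := abs_le.2 (hx j (Set.mem_univ j))
    have hS : ∀ i, (x i - a i) ^ 2 ≤ ∑ k, (x k - a k) ^ 2 := fun i =>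
      Finset.single_le_sum (f := fun k => (x k - a k) ^ 2) (fun k _ => sq_nonneg _)
        (Finset.mem_univ i)
    rw [e, add_mul, Finset.sum_mul]
    refine (abs_add_le _ _).trans (add_le_add ?_ ((Finset.abs_sum_le_sum_abs _ _).trans
      (Finset.sum_le_sum fun i _ => ?_)))
    · rw [abs_mul]
      exact (mul_le_of_le_one_left (abs_nonneg _) hxj).trans (h x hx)
    · rw [abs_mul]
      refine mul_le_mul_of_nonneg_left ?_ (abs_nonneg _)
      rw [abs_le]
      constructor <;>
        nlinarith [hS i, hS j, sq_nonneg (x i - a i + (x j - a j)),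
          sq_nonneg (x i - a i - (x j - a j))]

/-- At a minimizer over the cube, the linear coefficient vanishes along every coordinate
that is not on the boundary. -/
lemma partial_eq_zero {n : ℕ} (f : MvPolynomial (Fin n) ℝ) (a c : Fin n → ℝ) (M : ℝ)
    (ha : a ∈ Set.univ.pi fun _ => Set.Icc (-1 : ℝ) 1)
    (hmin : ∀ y ∈ Set.univ.pi fun _ => Set.Icc (-1 : ℝ) 1, eval a f ≤ eval y f) (hM : 0 ≤ M)
    (h : ∀ x ∈ Set.univ.pi fun _ : Fin n => Set.Icc (-1 : ℝ) 1,
      |eval x f - eval a f - ∑ i, c i * (x i - a i)| ≤ M * ∑ i, (x i - a i) ^ 2)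
    (i : Fin n) (hi : a i ∈ Set.Ioo (-1 : ℝ) 1) : c i = 0 := by
  have hstep : ∀ t : ℝ, a i + t ∈ Set.Icc (-1 : ℝ) 1 → 0 ≤ c i * t + M * t ^ 2 := by
    intro t ht
    have hy : Function.update a i (a i + t) ∈ Set.univ.pi fun _ => Set.Icc (-1 : ℝ) 1 := by
      intro j _
      rcases eq_or_ne j i with rfl | hj
      · simpa using ht
      · simpa [hj] using ha j (Set.mem_univ j)
    have h1 := (abs_le.1 (h _ hy)).2
    have h2 := hmin _ hy
    have s1 : ∑ j, c j * (Function.update a i (a i + t) j - a j) = c i * t := by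
      rw [Finset.sum_eq_single i]
      · simp
      · intro j _ hj; simp [hj]
      · simp
    have s2 : ∑ j, (Function.update a i (a i + t) j - a j) ^ 2 = t ^ 2 := by
      rw [Finset.sum_eq_single i]
      · simp
      · intro j _ hj; simp [hj]
      · simp
    rw [s1, s2] at h1
    linarith
  by_contra hc
  -- step of length `ε` against the sign of `c i`, short enough for the linear term to dominate
  obtain ⟨ε, hε, hε1, hε2⟩ : ∃ ε > 0, ε ≤ min (1 - a i) (1 + a i) ∧ M * ε < |c i| := by
    have h0 : 0 < min (1 - a i) (1 + a i) :=
      lt_min (by linarith [hi.2]) (by linarith [hi.1])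
    refine ⟨min (min (1 - a i) (1 + a i)) (|c i| / (M + 1)),
      lt_min h0 (by positivity), min_le_left _ _, ?_⟩
    have hp : 0 < |c i| := abs_pos.2 hc
    calc M * min (min (1 - a i) (1 + a i)) (|c i| / (M + 1)) ≤ M * (|c i| / (M + 1)) := by
          gcongr; exact min_le_right _ _
      _ = |c i| * (M / (M + 1)) := by ring
      _ < |c i| * 1 := by
          gcongr; rw [div_lt_one (by linarith)]; linarith
      _ = _ := mul_one _
  obtain ⟨e1, e2⟩ := le_min_iff.1 hε1
  rcases lt_or_gt_of_ne hc with h' | h'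
  · have := hstep ε ⟨by linarith [hi.1], by linarith⟩
    rw [abs_of_neg h'] at hε2
    nlinarith
  · have := hstep (-ε) ⟨by linarith, by linarith [hi.2]⟩
    rw [abs_of_pos h'] at hε2
    nlinarith

/-! ### Product densities on the cube -/

lemma totalDegree_aeval_X_le {n : ℕ} (i : Fin n) (p : Polynomial ℝ) :
    (Polynomial.aeval (X i : MvPolynomial (Fin n) ℝ) p).totalDegree ≤ p.natDegree := by
  rw [Polynomial.aeval_eq_sum_range]
  refine totalDegree_finsetSum_le fun k hk => (totalDegree_smul_le _ _).trans ?_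
  rw [totalDegree_X_pow]
  exact Nat.lt_succ_iff.1 (Finset.mem_range.1 hk)

lemma integral_cube_prod {n : ℕ} (g : Fin n → ℝ → ℝ) :
    ∫ x in Set.univ.pi fun _ : Fin n => Set.Icc (-1 : ℝ) 1, ∏ i, g i (x i)
      = ∏ i, ∫ t in Set.Icc (-1 : ℝ) 1, g i t := by
  rw [volume_pi, Measure.restrict_pi_pi]
  exact integral_fintype_prod_eq_prod g

/-- Let `f` be a real polynomial with global minimizer `x*` on the unit
cube `K = [-1,1]^n`. Then there is `C(f) > 0` such that for every `d ≥ 1` there is an SOS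
polynomial `σ⁽ᵈ⁾` of degree at most `2d` with `∫_K σ⁽ᵈ⁾ dλ = 1` and
`∫_K f σ⁽ᵈ⁾ dλ − f(x*) ≤ C(f)/d²`, where `λ` is Lebesgue measure restricted to `K`. -/
theorem stmt_11 (n : ℕ) (f : MvPolynomial (Fin n) ℝ)
    (xs : Fin n → ℝ) (hxs : xs ∈ Set.univ.pi fun _ => Set.Icc (-1 : ℝ) 1)
    (hmin : ∀ y ∈ Set.univ.pi fun _ => Set.Icc (-1 : ℝ) 1, eval xs f ≤ eval y f) :
    ∃ C : ℝ, 0 < C ∧ ∀ d : ℕ, 1 ≤ d → ∃ σ : MvPolynomial (Fin n) ℝ,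
      IsSOSUpTo n d σ ∧
      (∫ x in Set.univ.pi fun _ => Set.Icc (-1 : ℝ) 1, eval x σ) = 1 ∧
      (∫ x in Set.univ.pi fun _ => Set.Icc (-1 : ℝ) 1, eval x f * eval x σ) - eval xs f ≤
        C / (d : ℝ) ^ 2 := by
  obtain ⟨c, M, hM, hT⟩ := taylor_bound xs f
  have hc := partial_eq_zero f xs c M hxs hmin hM hT
  choose G hG hdens using fun i => coordinate_density (xs i) (hxs i (Set.mem_univ i))
  set K := Set.univ.pi fun _ : Fin n => Set.Icc (-1 : ℝ) 1 with hK
  have hsep : ∀ x ∈ K, eval x f - eval xs f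
      ≤ ∑ i, (|c i| + 2 * M) * (1 - (G i).eval (x i)) := by
    intro x hx
    have h1 := (abs_le.1 (hT x hx)).2
    have h2 : ∑ i, c i * (x i - xs i) + M * ∑ i, (x i - xs i) ^ 2
        ≤ ∑ i, (|c i| + 2 * M) * (1 - (G i).eval (x i)) := by
      rw [Finset.mul_sum, ← Finset.sum_add_distrib]
      refine Finset.sum_le_sum fun i _ => ?_
      obtain ⟨q1, q2⟩ := hG i (x i) (hx i (Set.mem_univ i))
      have q3 : M * (x i - xs i) ^ 2 ≤ M * (2 * (1 - (G i).eval (x i))) :=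
        mul_le_mul_of_nonneg_left q1 hM
      have q4 : c i * (x i - xs i) ≤ |c i| * (1 - (G i).eval (x i)) := by
        rcases q2 with q | q
        · simp [hc i q]
        · calc _ ≤ |c i * (x i - xs i)| := le_abs_self _
            _ = |c i| * |x i - xs i| := abs_mul _ _
            _ ≤ _ := by gcongr
      linarith
    linarith
  set E := ∑ i, (|c i| + 2 * M) * (20480 * Real.pi) with hE
  have hE0 : 0 ≤ E := Finset.sum_nonneg fun i _ => by have := Real.pi_pos; positivity
  refine ⟨E * (4 * (n + 1)) ^ 2 + 1, by positivity, fun d hd => ?_⟩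
  -- the budget `d` is shared by the `n` factors, each of degree at most `4 * (m - 1)`
  obtain ⟨m, hm⟩ : ∃ m, m = d / (4 * (n + 1)) + 1 := ⟨_, rfl⟩
  have hm1 : 1 ≤ m := hm ▸ Nat.succ_pos _
  have hmd : (d : ℝ) ≤ 4 * (n + 1) * m := by
    have : d < 4 * (n + 1) * m := by rw [hm]; exact Nat.lt_mul_div_succ d (by positivity)
    exact_mod_cast this.le
  choose h hdeg hone hmom using fun i => hdens i m hm1
  set H : MvPolynomial (Fin n) ℝ := ∏ i, Polynomial.aeval (X i) (h i) with hH
  have hHe : ∀ x : Fin n → ℝ, eval x (H ^ 2) = ∏ i, (h i).eval (x i) ^ 2 := by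
    intro x
    have : ∀ i, eval x (Polynomial.aeval (X i) (h i)) = (h i).eval (x i) := by
      intro i
      have hid : (eval x).comp (algebraMap ℝ (MvPolynomial (Fin n) ℝ)) = RingHom.id ℝ := by
        ext r; simp
      rw [Polynomial.aeval_def, Polynomial.hom_eval₂, hid, eval_X, Polynomial.eval₂_id]
    rw [map_pow, hH, map_prod, ← Finset.prod_pow]
    simp_rw [this]
  have hKc : IsCompact K := isCompact_univ_pi fun _ => isCompact_Icc
  have hinteg : ∀ q : (Fin n → ℝ) → ℝ, Continuous q → IntegrableOn q K := fun q hq =>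
    hq.continuousOn.integrableOn_compact hKc
  have hGc : ∀ i, Continuous fun x : Fin n → ℝ => (G i).eval (x i) := fun i =>
    (G i).continuous.comp (continuous_apply i)
  have hfc : Continuous fun x => eval x f := MvPolynomial.continuous_eval f
  have hσc : Continuous fun x => eval x (H ^ 2) := MvPolynomial.continuous_eval _
  have hmass : ∫ x in K, eval x (H ^ 2) = 1 := by
    simp_rw [hHe]
    rw [hK, integral_cube_prod fun i t => (h i).eval t ^ 2]
    exact Finset.prod_eq_one fun i _ => hone i
  have hcoord : ∀ i, ∫ x in K, (1 - (G i).eval (x i)) * eval x (H ^ 2)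
      ≤ 20480 * Real.pi / (m : ℝ) ^ 2 := by
    intro i
    have e : ∀ x : Fin n → ℝ, (1 - (G i).eval (x i)) * eval x (H ^ 2)
        = ∏ j, (if j = i then 1 - (G i).eval (x j) else 1) * (h j).eval (x j) ^ 2 := by
      intro x
      rw [hHe, Finset.prod_mul_distrib, Finset.prod_ite_eq' Finset.univ i]
      simp
    simp_rw [e]
    rw [hK, integral_cube_prod
      fun j t => (if j = i then 1 - (G i).eval t else 1) * (h j).eval t ^ 2,
      Finset.prod_eq_single i]
    · simpa using hmom i
    · intro j _ hj
      simpa [hj] using hone j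
    · simp
  refine ⟨H ^ 2, ⟨1, fun _ => H, fun _ => ?_, by simp⟩, hmass, ?_⟩
  · refine (totalDegree_finsetProd _ _).trans ((Finset.sum_le_sum fun i _ =>
      (totalDegree_aeval_X_le i (h i)).trans (hdeg i)).trans ?_)
    have h1 : d / (4 * (n + 1)) * (4 * (n + 1)) ≤ d := Nat.div_mul_le_self _ _
    rw [Finset.sum_const, Finset.card_univ, Fintype.card_fin, smul_eq_mul, hm,
      Nat.add_sub_cancel]
    nlinarith
  · have e1 : (∫ x in K, eval x f * eval x (H ^ 2)) - eval xs f
        = ∫ x in K, (eval x f - eval xs f) * eval x (H ^ 2) := by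
      simp_rw [sub_mul]
      rw [integral_sub (hinteg (fun x => eval x f * eval x (H ^ 2)) (hfc.mul hσc))
          (hinteg (fun x => eval xs f * eval x (H ^ 2)) (continuous_const.mul hσc)),
        integral_const_mul, hmass, mul_one]
    have e2 : ∫ x in K, (eval x f - eval xs f) * eval x (H ^ 2)
        ≤ ∫ x in K, ∑ i, (|c i| + 2 * M) * ((1 - (G i).eval (x i)) * eval x (H ^ 2)) := by
      refine setIntegral_mono_on (hinteg _ ((hfc.sub continuous_const).mul hσc))
        (hinteg _ (continuous_finsetSum _ fun i _ =>
          continuous_const.mul ((continuous_const.sub (hGc i)).mul hσc)))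
        (MeasurableSet.univ_pi fun _ => measurableSet_Icc) fun x hx => ?_
      have : 0 ≤ eval x (H ^ 2) := by rw [map_pow]; positivity
      refine (mul_le_mul_of_nonneg_right (hsep x hx) this).trans_eq ?_
      rw [Finset.sum_mul]
      exact Finset.sum_congr rfl fun i _ => by ring
    have hm0 : (0 : ℝ) < m := by exact_mod_cast hm1
    have hd0 : (0 : ℝ) < d := by exact_mod_cast hd
    rw [e1]
    refine e2.trans ?_
    rw [integral_finsetSum _ fun i _ => hinteg
      (fun x => (|c i| + 2 * M) * ((1 - (G i).eval (x i)) * eval x (H ^ 2)))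
      (continuous_const.mul ((continuous_const.sub (hGc i)).mul hσc))]
    calc ∑ i, ∫ x in K, (|c i| + 2 * M) * ((1 - (G i).eval (x i)) * eval x (H ^ 2))
        ≤ ∑ i, (|c i| + 2 * M) * (20480 * Real.pi / (m : ℝ) ^ 2) := by
          refine Finset.sum_le_sum fun i _ => ?_
          rw [integral_const_mul]
          exact mul_le_mul_of_nonneg_left (hcoord i) (by positivity)
      _ = E / (m : ℝ) ^ 2 := by
          rw [hE, Finset.sum_div]
          exact Finset.sum_congr rfl fun i _ => by ring
      _ ≤ (E * (4 * (n + 1)) ^ 2 + 1) / (d : ℝ) ^ 2 := by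
          rw [div_le_div_iff₀ (by positivity) (by positivity)]
          have : (d : ℝ) ^ 2 ≤ (4 * (n + 1) * m) ^ 2 := by gcongr
          calc E * (d : ℝ) ^ 2 ≤ E * (4 * (n + 1) * m) ^ 2 := by gcongr
            _ = E * (4 * (n + 1)) ^ 2 * (m : ℝ) ^ 2 := by ring
            _ ≤ _ := by gcongr; linarith
end

section
/- Let K = [-1,1]^n, let λ be Lebesgue measure restricted to K, and for i = 1,…,N let f_i, g_i be real polynomials with g_i(x) > 0 for all x ∈ K; set ρ := min_{x∈K} Σ_{i=1}^N f_i(x)/g_i(x). Then there exists a sequence (ε_s)_{s∈ℕ} of positive reals with ε_s → 0 such that for every s ∈ ℕ there exist SOS polynomials σ_1,…,σ_N satisfying: (a) |∫_K x^α g_i σ_i dλ − ∫_K x^α g_1 σ_1 dλ| ≤ ε_s for every multi-index α with |α| ≤ s and every 2 ≤ i ≤ N; (b) |∫_K g_1 σ_1 dλ − 1| ≤ ε_s; and (c) |Σ_{i=1}^N ∫_K f_i σ_i dλ − ρ| ≤ ε_s. -/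
/-!
Fix a tolerance `e > 0` and put `F = ∑ i, f i / g i`. The function `max 0 (ρ + e - F)` is
continuous and nonnegative on `K`, and positive near the minimizer of `F`. Since `K` is the closure
of its interior, its integral over `K` is positive, so it normalizes to a density `φ`
(`exists_density`). On the support of `φ` one has `ρ ≤ F ≤ ρ + e`, hence `|∫ F φ - ρ| ≤ e`.

The functions `φ / g i` are continuous and nonnegative on `K`. Approximating their square roots
uniformly by polynomials (Stone–Weierstrass) and squaring gives SOS polynomials `σ i` with
`σ i ≈ φ / g i` uniformly on `K` (`exists_sos_near`). Then `g i * σ i ≈ φ` for all `i`, and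
`∑ i, f i * σ i ≈ F φ`, uniformly on `K`. Since all monomials are bounded by `1` on `K`, the three
estimates hold, for all multi-indices `α` at once, and `ε s = 1 / (s + 1)` works.
-/

open MeasureTheory MvPolynomial

/-- A polynomial is a sum of squares (SOS). -/
def IsSOS (n : ℕ) (σ : MvPolynomial (Fin n) ℝ) : Prop :=
  ∃ (m : ℕ) (h : Fin m → MvPolynomial (Fin n) ℝ), σ = ∑ k, h k ^ 2

/-- Stone–Weierstrass for multivariate polynomials on a compact subset of `ℝⁿ`. -/
lemma exists_mvPolynomial_near {n : ℕ} {K : Set (Fin n → ℝ)} (hK : IsCompact K)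
    {w : (Fin n → ℝ) → ℝ} (hw : ContinuousOn w K) {δ : ℝ} (hδ : 0 < δ) :
    ∃ p : MvPolynomial (Fin n) ℝ, ∀ x ∈ K, |eval x p - w x| < δ := by
  have : CompactSpace K := isCompact_iff_compactSpace.mp hK
  let X : Fin n → C(K, ℝ) := fun k =>
    ⟨fun x => x.1 k, (continuous_apply k).comp continuous_subtype_val⟩
  have hev : ∀ (p : MvPolynomial (Fin n) ℝ) (x : K), aeval X p x = eval x.1 p := by
    intro p x
    induction p using MvPolynomial.induction_on with
    | C a => simp
    | add p q hp hq => simp [hp, hq]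
    | mul_X p i hp => simp [hp, X]
  have hsep : (aeval X : MvPolynomial (Fin n) ℝ →ₐ[ℝ] C(K, ℝ)).range.SeparatesPoints := by
    intro x y hxy
    obtain ⟨k, hk⟩ : ∃ k, x.1 k ≠ y.1 k := by
      by_contra! h
      exact hxy (Subtype.ext (funext h))
    exact ⟨X k, ⟨X k, ⟨MvPolynomial.X k, by simp⟩, rfl⟩, hk⟩
  obtain ⟨⟨q, p, hp⟩, hq⟩ :=
    ContinuousMap.exists_mem_subalgebra_near_continuous_of_separatesPoints _ hsep
      (fun x : K => w x.1) hw.domRestrict δ hδ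
  refine ⟨p, fun x hx => ?_⟩
  have := hq ⟨x, hx⟩
  rw [← hev p ⟨x, hx⟩]
  simpa [← hp] using this

/-- SOS polynomials are uniformly dense among the nonnegative continuous functions on a compact
set: approximate the square root and square. -/
lemma exists_sos_near {n : ℕ} {K : Set (Fin n → ℝ)} (hK : IsCompact K)
    {ψ : (Fin n → ℝ) → ℝ} (hψ : ContinuousOn ψ K) (hψ0 : ∀ x ∈ K, 0 ≤ ψ x)
    {η : ℝ} (hη : 0 < η) :
    ∃ σ : MvPolynomial (Fin n) ℝ, IsSOS n σ ∧ ∀ x ∈ K, |eval x σ - ψ x| ≤ η := by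
  have hw : ContinuousOn (fun x => √(ψ x)) K := hψ.sqrt
  obtain ⟨M, hM⟩ := hK.exists_bound_of_continuousOn hw
  have hden : 0 < 2 * |M| + 1 := by positivity
  obtain ⟨p, hp⟩ := exists_mvPolynomial_near hK hw
    (δ := min 1 (η / (2 * |M| + 1))) (by positivity)
  refine ⟨p ^ 2, ⟨1, fun _ => p, by simp⟩, fun x hx => ?_⟩
  have h1 := (hp x hx).le
  have h2 : |eval x p - √(ψ x)| ≤ 1 := h1.trans (min_le_left _ _)
  have h3 : |eval x p - √(ψ x)| ≤ η / (2 * |M| + 1) := h1.trans (min_le_right _ _)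
  have h4 : |√(ψ x)| ≤ |M| := (hM x hx).trans (le_abs_self _)
  have h5 : |eval x p + √(ψ x)| ≤ 2 * |M| + 1 := by
    rw [abs_le] at *
    constructor <;> linarith
  calc |eval x (p ^ 2) - ψ x| = |eval x p - √(ψ x)| * |eval x p + √(ψ x)| := by
        rw [← abs_mul, map_pow]
        congr 1
        nlinarith [Real.sq_sqrt (hψ0 x hx)]
    _ ≤ η / (2 * |M| + 1) * (2 * |M| + 1) := by gcongr
    _ = η := by field_simp

/-- A continuous probability density on `K` concentrated near the minimizers of `F`. -/
lemma exists_density {n : ℕ} {K : Set (Fin n → ℝ)} (hK : IsCompact K)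
    (hKcl : K ⊆ closure (interior K)) {F : (Fin n → ℝ) → ℝ} (hF : ContinuousOn F K) {ρ : ℝ}
    (hρ : IsLeast (F '' K) ρ) {e : ℝ} (he : 0 < e) :
    ∃ φ : (Fin n → ℝ) → ℝ, ContinuousOn φ K ∧ (∀ x ∈ K, 0 ≤ φ x) ∧ (∫ x in K, φ x) = 1 ∧
      |(∫ x in K, F x * φ x) - ρ| ≤ e := by
  set φ₀ : (Fin n → ℝ) → ℝ := fun x => max 0 (ρ + e - F x) with hφ₀
  have hc : ContinuousOn φ₀ K := by fun_prop
  have hnn : ∀ x, 0 ≤ φ₀ x := fun x => le_max_left _ _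
  have hI : 0 < ∫ x in K, φ₀ x := by
    rw [setIntegral_pos_iff_support_of_nonneg_ae (Filter.Eventually.of_forall hnn)
      (hc.integrableOn_compact hK)]
    obtain ⟨x, hx, hxρ⟩ := hρ.1
    obtain ⟨U, hU, hUK⟩ := continuousOn_iff'.mp hc (Set.Ioi 0) isOpen_Ioi
    have hxU : x ∈ U := by
      have : x ∈ φ₀ ⁻¹' Set.Ioi 0 ∩ K := ⟨by simp [hφ₀, hxρ, he], hx⟩
      rw [hUK] at this
      exact this.1
    have hne : (U ∩ interior K).Nonempty := mem_closure_iff.mp (hKcl hx) U hU hxU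
    refine ((hU.inter isOpen_interior).measure_pos volume hne).trans_le (measure_mono ?_)
    intro y hy
    have : y ∈ φ₀ ⁻¹' Set.Ioi 0 ∩ K := by
      rw [hUK]
      exact ⟨hy.1, interior_subset hy.2⟩
    exact ⟨ne_of_gt this.1, this.2⟩
  set I := ∫ x in K, φ₀ x with hIdef
  have hφc : ContinuousOn (fun x => φ₀ x / I) K := hc.div_const I
  have hint : (∫ x in K, φ₀ x / I) = 1 := by
    rw [integral_div, ← hIdef, div_self hI.ne']
  refine ⟨fun x => φ₀ x / I, hφc, fun x _ => div_nonneg (hnn x) hI.le, hint, ?_⟩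
  have hlo : ∀ x ∈ K, ρ * (φ₀ x / I) ≤ F x * (φ₀ x / I) := fun x hx =>
    mul_le_mul_of_nonneg_right (hρ.2 ⟨x, hx, rfl⟩) (div_nonneg (hnn x) hI.le)
  have hhi : ∀ x ∈ K, F x * (φ₀ x / I) ≤ (ρ + e) * (φ₀ x / I) := by
    intro x _
    rcases le_total (ρ + e - F x) 0 with h | h
    · simp [hφ₀, max_eq_left h]
    · exact mul_le_mul_of_nonneg_right (by linarith) (div_nonneg (hnn x) hI.le)
  have iφ := hφc.integrableOn_compact hK (μ := volume)
  have iF : IntegrableOn (fun x => F x * (φ₀ x / I)) K :=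
    (hF.mul hφc).integrableOn_compact hK
  have h1 := setIntegral_mono_on (iφ.const_mul ρ) iF hK.measurableSet hlo
  have h2 := setIntegral_mono_on iF (iφ.const_mul (ρ + e)) hK.measurableSet hhi
  rw [integral_const_mul, hint] at h1 h2
  refine abs_le.mpr ⟨?_, ?_⟩ <;> dsimp only <;> linarith

/-- Uniformly close continuous functions have close integrals. -/
lemma abs_setIntegral_sub_le {n : ℕ} {K : Set (Fin n → ℝ)} (hK : IsCompact K)
    {a b : (Fin n → ℝ) → ℝ} (ha : ContinuousOn a K) (hb : ContinuousOn b K) {c : ℝ}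
    (h : ∀ x ∈ K, |a x - b x| ≤ c) :
    |(∫ x in K, a x) - ∫ x in K, b x| ≤ c * volume.real K := by
  rw [← integral_sub (ha.integrableOn_compact hK) (hb.integrableOn_compact hK)]
  exact norm_setIntegral_le_of_norm_le_const (f := fun x => a x - b x) hK.measure_lt_top h

/-- SOS polynomials `σ` for which `g * σ` and `f * σ` are uniformly close to `φ` and
`f / g * φ`. -/
lemma exists_sos_mul_near {n : ℕ} {K : Set (Fin n → ℝ)} (hK : IsCompact K)
    (f g : MvPolynomial (Fin n) ℝ) (hg : ∀ x ∈ K, 0 < eval x g)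
    {φ : (Fin n → ℝ) → ℝ} (hφ : ContinuousOn φ K) (hφ0 : ∀ x ∈ K, 0 ≤ φ x)
    {η : ℝ} (hη : 0 < η) :
    ∃ σ : MvPolynomial (Fin n) ℝ, IsSOS n σ ∧
      (∀ x ∈ K, |eval x g * eval x σ - φ x| ≤ η) ∧
      ∀ x ∈ K, |eval x f * eval x σ - eval x f / eval x g * φ x| ≤ η := by
  have hfc : Continuous fun x => eval x f := f.continuous_eval
  have hgc : Continuous fun x => eval x g := g.continuous_eval
  obtain ⟨A, hA⟩ := hK.exists_bound_of_continuousOn hfc.continuousOn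
  obtain ⟨B, hB⟩ := hK.exists_bound_of_continuousOn hgc.continuousOn
  have hden : 0 < |A| + |B| + 1 := by positivity
  obtain ⟨σ, hσ, hn⟩ := exists_sos_near hK
    (hφ.div hgc.continuousOn fun x hx => (hg x hx).ne')
    (fun x hx => div_nonneg (hφ0 x hx) (hg x hx).le) (η := η / (|A| + |B| + 1)) (by positivity)
  have key : ∀ t : ℝ, ∀ x ∈ K, |t| ≤ |A| + |B| + 1 →
      |t * (eval x σ - φ x / eval x g)| ≤ η := by
    intro t x hx ht
    rw [abs_mul]
    calc |t| * |eval x σ - φ x / eval x g|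
        ≤ (|A| + |B| + 1) * (η / (|A| + |B| + 1)) := by
          gcongr
          exact hn x hx
      _ = η := by field_simp
  refine ⟨σ, hσ, fun x hx => ?_, fun x hx => ?_⟩
  · have := key (eval x g) x hx
      (by linarith [show |eval x g| ≤ B from hB x hx, le_abs_self B, abs_nonneg A])
    rwa [mul_sub, mul_div_cancel₀ _ (hg x hx).ne'] at this
  · have := key (eval x f) x hx
      (by linarith [show |eval x f| ≤ A from hA x hx, le_abs_self A, abs_nonneg B])
    rwa [mul_sub, ← mul_div_assoc, ← div_mul_eq_mul_div] at this

/-- Let `K = [-1,1]^n`, `λ` Lebesgue measure restricted to `K`, and for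
`i : Fin (N+1)` (with `i = 0` playing the role of the first fraction) let `f_i, g_i` be
polynomials with `g_i > 0` on `K`; set `ρ := min_K Σ_i f_i/g_i`. Then there exists a
sequence `ε_s > 0` with `ε_s → 0` such that for every `s` there are SOS polynomials `σ_i`
with (a) `|∫_K x^α g_i σ_i dλ − ∫_K x^α g_0 σ_0 dλ| ≤ ε_s` for all `|α| ≤ s` and `i ≠ 0`,
(b) `|∫_K g_0 σ_0 dλ − 1| ≤ ε_s`, and (c) `|Σ_i ∫_K f_i σ_i dλ − ρ| ≤ ε_s`. -/
theorem stmt_13 (n N : ℕ)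
    (K : Set (Fin n → ℝ)) (hKdef : K = Set.univ.pi fun _ => Set.Icc (-1 : ℝ) 1)
    (f g : Fin (N + 1) → MvPolynomial (Fin n) ℝ)
    (hg : ∀ i, ∀ x ∈ K, 0 < eval x (g i))
    (ρ : ℝ)
    (hρ : IsLeast ((fun x => ∑ i, eval x (f i) / eval x (g i)) '' K) ρ) :
    ∃ ε : ℕ → ℝ, (∀ s, 0 < ε s) ∧ Filter.Tendsto ε Filter.atTop (nhds 0) ∧
      ∀ s : ℕ, ∃ σ : Fin (N + 1) → MvPolynomial (Fin n) ℝ,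
        (∀ i, IsSOS n (σ i)) ∧
        (∀ α : Fin n → Fin (s + 1), (∑ i, (α i : ℕ)) ≤ s → ∀ i, i ≠ 0 →
          |(∫ x in K, (∏ k, x k ^ (α k : ℕ)) * eval x (g i) * eval x (σ i)) -
            ∫ x in K, (∏ k, x k ^ (α k : ℕ)) * eval x (g 0) * eval x (σ 0)| ≤ ε s) ∧
        |(∫ x in K, eval x (g 0) * eval x (σ 0)) - 1| ≤ ε s ∧
        |(∑ i, ∫ x in K, eval x (f i) * eval x (σ i)) - ρ| ≤ ε s := by
  have hK : IsCompact K := hKdef ▸ isCompact_univ_pi fun _ => isCompact_Icc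
  have hKcl : K ⊆ closure (interior K) := by
    rw [hKdef, interior_pi_set Set.finite_univ, closure_pi_set]
    simp_rw [interior_Icc, closure_Ioo (show (-1 : ℝ) ≠ 1 by norm_num)]
    exact subset_rfl
  have hmon : ∀ x ∈ K, ∀ m : Fin n → ℕ, |∏ k, x k ^ m k| ≤ 1 := by
    intro x hx m
    rw [Finset.abs_prod]
    refine Finset.prod_le_one (fun _ _ => abs_nonneg _) fun k _ => ?_
    rw [abs_pow]
    rw [hKdef] at hx
    exact pow_le_one₀ (abs_nonneg _) (abs_le.mpr (hx k (Set.mem_univ k)))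
  have hfc : ∀ i, Continuous fun x => eval x (f i) := fun i => (f i).continuous_eval
  have hgc : ∀ i, Continuous fun x => eval x (g i) := fun i => (g i).continuous_eval
  have hqc : ∀ i, ContinuousOn (fun x => eval x (f i) / eval x (g i)) K := fun i =>
    (hfc i).continuousOn.div (hgc i).continuousOn fun x hx => (hg i x hx).ne'
  have hFc : ContinuousOn (fun x => ∑ i, eval x (f i) / eval x (g i)) K :=
    continuousOn_finsetSum _ fun i _ => hqc i
  refine ⟨fun s => 1 / ((s : ℝ) + 1), fun s => by positivity,
    tendsto_one_div_add_atTop_nhds_zero_nat, fun s => ?_⟩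
  set ε : ℝ := 1 / ((s : ℝ) + 1)
  have hε : 0 < ε := by positivity
  obtain ⟨φ, hφc, hφ0, hφ1, hφρ⟩ := exists_density hK hKcl hFc hρ (half_pos hε)
  set V := volume.real K
  have hV : 0 ≤ V := measureReal_nonneg
  -- The error budget: `N + 1` uniform errors of size `η` integrate to at most `ε / 2`.
  obtain ⟨η, hη, hηV⟩ : ∃ η : ℝ, 0 < η ∧ (N + 1) * (η * V) ≤ ε / 2 := by
    refine ⟨ε / (2 * ((N + 1) * (V + 1))), by positivity, ?_⟩
    have : (N + 1) * (ε / (2 * ((N + 1) * (V + 1))) * V) = ε / 2 * (V / (V + 1)) := by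
      field_simp
    rw [this]
    exact mul_le_of_le_one_right (by positivity) (div_le_one_of_le₀ (by linarith) (by linarith))
  have hηV' : η * V ≤ ε / 2 := by
    have : 0 ≤ N * (η * V) := by positivity
    linarith
  choose σ hσ hgσ hfσ using fun i => exists_sos_mul_near hK (f i) (g i) (hg i) hφc hφ0 hη
  have hσc : ∀ i, Continuous fun x => eval x (σ i) := fun i => (σ i).continuous_eval
  have hclose : ∀ (m : Fin n → ℕ) i,
      |(∫ x in K, (∏ k, x k ^ m k) * eval x (g i) * eval x (σ i)) -
        ∫ x in K, (∏ k, x k ^ m k) * φ x| ≤ η * V := by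
    intro m i
    have hmc : Continuous fun x : Fin n → ℝ => ∏ k, x k ^ m k := by fun_prop
    simp_rw [mul_assoc]
    refine abs_setIntegral_sub_le hK (hmc.mul ((hgc i).mul (hσc i))).continuousOn
      (hmc.continuousOn.mul hφc) fun x hx => ?_
    change |(∏ k, x k ^ m k) * (eval x (g i) * eval x (σ i)) - (∏ k, x k ^ m k) * φ x| ≤ η
    rw [← mul_sub, abs_mul]
    exact (mul_le_of_le_one_left (abs_nonneg _) (hmon x hx m)).trans (hgσ i x hx)
  refine ⟨σ, hσ, fun α _ i _ => ?_, ?_, ?_⟩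
  · have h1 := hclose (fun k => α k) i
    have h2 := hclose (fun k => α k) 0
    rw [abs_le] at *
    constructor <;> linarith
  · have h := hclose (fun _ => 0) 0
    simp only [pow_zero, Finset.prod_const_one, one_mul, hφ1] at h
    exact h.trans (by linarith)
  · have hsum : (∫ x in K, (∑ i, eval x (f i) / eval x (g i)) * φ x) =
        ∑ i, ∫ x in K, eval x (f i) / eval x (g i) * φ x := by
      simp_rw [Finset.sum_mul]
      exact integral_finsetSum _ fun i _ => ((hqc i).mul hφc).integrableOn_compact hK
    have hS : |(∑ i, ∫ x in K, eval x (f i) * eval x (σ i)) -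
        ∑ i, ∫ x in K, eval x (f i) / eval x (g i) * φ x| ≤ (N + 1) * (η * V) := by
      rw [← Finset.sum_sub_distrib]
      refine (Finset.abs_sum_le_sum_abs _ _).trans ?_
      refine (Finset.sum_le_card_nsmul _ _ (η * V) fun i _ => ?_).trans (by simp)
      exact abs_setIntegral_sub_le hK ((hfc i).mul (hσc i)).continuousOn ((hqc i).mul hφc)
        (hfσ i)
    rw [← hsum] at hS
    rw [abs_le] at *
    constructor <;> linarith
end

section
/- Let K ⊆ ℝ^n be a nonempty compact set, μ a finite Borel measure whose support is exactly K, and f a real polynomial with global minimizer x* on K. Then there exist a sequence of SOS polynomials (σ^{(d)})_{d∈ℕ} with σ^{(d)} of degree at most 2d, and a function c : ℕ → [0,∞) with c(d) → 0 as d → ∞, such that for every d: ∫_K σ^{(d)}(x) dμ(x) = 1 and ∫_K f(x) σ^{(d)}(x) dμ(x) − f(x*) ≤ c(d). -/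
/-!
Normalise `f` on `K`: with `M > 0` bounding `f - f(x*)` on `K`, the polynomial
`g = (f - f(x*)) / M` takes values in `[0, 1]` on `K` and vanishes at `x*`. The powers `(1 - g) ^ (2k)`
are squares, and they concentrate where `g` is small, i.e. where `f` is nearly minimal: off
`{g < ε}` they are at most `(1 - ε) ^ (2k)`, whereas their integral is at least
`(1 - ε/2) ^ (2k) * μ {g < ε/2}`, and the last factor is positive because `x*` lies in the support
of `μ`. Hence the mean of `g` under the density proportional to `(1 - g) ^ (2k)` tends to `0`
(`tendsto_weighted_mean`). Taking `k = ⌊d / (deg f + 1)⌋` keeps `deg ((1 - g) ^ k) ≤ d`, and the gap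
`c d` is `M` times that mean.
-/

open MeasureTheory MvPolynomial

lemma integrable_of_continuous_of_compl_null {X : Type*} [TopologicalSpace X] [T2Space X]
    [MeasurableSpace X] [OpensMeasurableSpace X] {μ : Measure X} [IsFiniteMeasure μ] {K : Set X}
    (hK : IsCompact K) (hs : μ Kᶜ = 0) {g : X → ℝ} (hg : Continuous g) : Integrable g μ := by
  have h := hg.continuousOn.integrableOn_compact (μ := μ) hK
  rwa [IntegrableOn, Measure.restrict_eq_self_of_ae_mem (mem_ae_iff.2 hs)] at h

section WeightedMean

variable {X : Type*} [MeasurableSpace X] {μ : Measure X} [IsFiniteMeasure μ] {g : X → ℝ}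

/-- The lower bound on the normalising constant, by Markov's inequality on `{g < ε}`. -/
lemma measure_mul_pow_le_integral (h0 : ∀ᵐ x ∂μ, g x ≤ 1)
    (hi : ∀ N : ℕ, Integrable (fun x => (1 - g x) ^ N) μ) {ε : ℝ} (hε1 : ε ≤ 1) (N : ℕ) :
    (1 - ε) ^ N * μ.real {x | g x < ε} ≤ ∫ x, (1 - g x) ^ N ∂μ := by
  have hnn : 0 ≤ᵐ[μ] fun x => (1 - g x) ^ N := by
    filter_upwards [h0] with x hx
    exact pow_nonneg (by linarith) _
  refine le_trans ?_ (mul_meas_ge_le_integral_of_nonneg hnn (hi N) ((1 - ε) ^ N))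
  refine mul_le_mul_of_nonneg_left (measureReal_mono ?_) (pow_nonneg (by linarith) _)
  intro x hx
  have hx' : g x < ε := hx
  have hb : 1 - ε ≤ 1 - g x := by linarith
  exact pow_le_pow_left₀ (by linarith) hb N

lemma integral_pow_pos (h0 : ∀ᵐ x ∂μ, g x ≤ 1)
    (hi : ∀ N : ℕ, Integrable (fun x => (1 - g x) ^ N) μ)
    (hpos : ∀ ε : ℝ, 0 < ε → 0 < μ {x | g x < ε}) (N : ℕ) :
    0 < ∫ x, (1 - g x) ^ N ∂μ := by
  refine lt_of_lt_of_le ?_ (measure_mul_pow_le_integral h0 hi (ε := 1 / 2) (by norm_num) N)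
  have : 0 < μ.real {x | g x < 1 / 2} :=
    ENNReal.toReal_pos (hpos _ (by norm_num)).ne' (measure_ne_top _ _)
  exact mul_pos (by norm_num) this

/-- If `g` takes values in `[0, 1]` and has essential infimum `0`, its mean under the density
proportional to `(1 - g) ^ N` tends to `0`. -/
lemma tendsto_weighted_mean (h0 : ∀ᵐ x ∂μ, 0 ≤ g x) (h1 : ∀ᵐ x ∂μ, g x ≤ 1)
    (hi : ∀ N : ℕ, Integrable (fun x => (1 - g x) ^ N) μ)
    (hgi : ∀ N : ℕ, Integrable (fun x => g x * (1 - g x) ^ N) μ)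
    (hpos : ∀ ε : ℝ, 0 < ε → 0 < μ {x | g x < ε}) :
    Filter.Tendsto (fun N : ℕ => (∫ x, g x * (1 - g x) ^ N ∂μ) / ∫ x, (1 - g x) ^ N ∂μ)
      Filter.atTop (nhds 0) := by
  have hnn : ∀ N : ℕ, 0 ≤ (∫ x, g x * (1 - g x) ^ N ∂μ) / ∫ x, (1 - g x) ^ N ∂μ := by
    intro N
    refine div_nonneg (integral_nonneg_of_ae ?_) (integral_pow_pos h1 hi hpos N).le
    filter_upwards [h0, h1] with x hx hx'
    exact mul_nonneg hx (pow_nonneg (by linarith) _)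
  have key : ∀ ε : ℝ, 0 < ε → ε < 1 → ∀ N : ℕ,
      (∫ x, g x * (1 - g x) ^ N ∂μ) / (∫ x, (1 - g x) ^ N ∂μ) ≤
        ε + ((1 - ε) / (1 - ε / 2)) ^ N * (μ.real Set.univ / μ.real {x | g x < ε / 2}) := by
    intro ε hε hε1 N
    have hZ := integral_pow_pos h1 hi hpos N
    have hU : 0 < μ.real {x | g x < ε / 2} :=
      ENNReal.toReal_pos (hpos _ (by linarith)).ne' (measure_ne_top _ _)
    have hnum : (∫ x, g x * (1 - g x) ^ N ∂μ) ≤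
        ε * (∫ x, (1 - g x) ^ N ∂μ) + (1 - ε) ^ N * μ.real Set.univ := by
      calc (∫ x, g x * (1 - g x) ^ N ∂μ) ≤ ∫ x, (ε * (1 - g x) ^ N + (1 - ε) ^ N) ∂μ := by
            refine integral_mono_ae (hgi N) (((hi N).const_mul _).add (integrable_const _)) ?_
            filter_upwards [h0, h1] with x hx hx'
            have hp : 0 ≤ (1 - g x) ^ N := pow_nonneg (by linarith) _
            have hq : 0 ≤ (1 - ε) ^ N := pow_nonneg (by linarith) _
            rcases le_total (g x) ε with h | h
            · have := mul_le_mul_of_nonneg_right h hp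
              show g x * (1 - g x) ^ N ≤ ε * (1 - g x) ^ N + (1 - ε) ^ N
              linarith
            · have h2 : (1 - g x) ^ N ≤ (1 - ε) ^ N :=
                pow_le_pow_left₀ (by linarith) (by linarith) N
              have h3 := mul_le_mul_of_nonneg_right hx' hp
              have h4 := mul_nonneg hε.le hp
              show g x * (1 - g x) ^ N ≤ ε * (1 - g x) ^ N + (1 - ε) ^ N
              linarith
        _ = _ := by
            rw [integral_add ((hi N).const_mul _) (integrable_const _), integral_const_mul,
              integral_const, smul_eq_mul, mul_comm (μ.real Set.univ)]
    have hden := measure_mul_pow_le_integral h1 hi (ε := ε / 2) (by linarith) N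
    have hP : 0 < (1 - ε / 2) ^ N * μ.real {x | g x < ε / 2} :=
      mul_pos (pow_pos (by linarith) _) hU
    calc _ ≤ (ε * (∫ x, (1 - g x) ^ N ∂μ) + (1 - ε) ^ N * μ.real Set.univ) /
          (∫ x, (1 - g x) ^ N ∂μ) := div_le_div_of_nonneg_right hnum hZ.le
      _ = ε + (1 - ε) ^ N * μ.real Set.univ / (∫ x, (1 - g x) ^ N ∂μ) := by
          field_simp
      _ ≤ ε + (1 - ε) ^ N * μ.real Set.univ /
          ((1 - ε / 2) ^ N * μ.real {x | g x < ε / 2}) := by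
          refine add_le_add le_rfl (div_le_div_of_nonneg_left ?_ hP hden)
          exact mul_nonneg (pow_nonneg (by linarith) _) measureReal_nonneg
      _ = _ := by rw [div_pow, mul_div_mul_comm]
  rw [Metric.tendsto_atTop]
  intro δ hδ
  obtain ⟨ε, hε, hεm⟩ := exists_between (show (0 : ℝ) < min (δ / 2) 1 by positivity)
  have hε1 : ε < 1 := hεm.trans_le (min_le_right _ _)
  have hεδ : ε < δ / 2 := hεm.trans_le (min_le_left _ _)
  have hlim : Filter.Tendsto (fun N : ℕ => ((1 - ε) / (1 - ε / 2)) ^ N *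
      (μ.real Set.univ / μ.real {x | g x < ε / 2})) Filter.atTop (nhds 0) := by
    have := (tendsto_pow_atTop_nhds_zero_of_lt_one
      (div_nonneg (by linarith : 0 ≤ 1 - ε) (by linarith : 0 ≤ 1 - ε / 2))
      ((div_lt_one (by linarith)).2 (by linarith))).mul_const
        (μ.real Set.univ / μ.real {x | g x < ε / 2})
    rwa [zero_mul] at this
  obtain ⟨N₀, hN₀⟩ := Filter.eventually_atTop.1 (hlim.eventually_lt_const (half_pos hδ))
  refine ⟨N₀, fun N hN => ?_⟩
  rw [Real.dist_eq, sub_zero, abs_of_nonneg (hnn N)]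
  have := key ε hε hε1 N
  have := hN₀ N hN
  linarith

end WeightedMean

/-- Let `K ⊆ ℝ^n` be nonempty compact, `μ` a finite Borel measure with
support exactly `K`, and `f` a polynomial with global minimizer `x*` on `K`. Then there
exist SOS polynomials `σ⁽ᵈ⁾` of degree at most `2d` and a function `c : ℕ → [0,∞)` with
`c(d) → 0`, such that for every `d`: `∫_K σ⁽ᵈ⁾ dμ = 1` and
`∫_K f σ⁽ᵈ⁾ dμ − f(x*) ≤ c(d)`. -/
theorem stmt_14 (n : ℕ) (K : Set (Fin n → ℝ)) (hK : IsCompact K) (hKne : K.Nonempty)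
    (μ : Measure (Fin n → ℝ)) [IsFiniteMeasure μ]
    (hsupp : μ Kᶜ = 0)
    (hpos : ∀ U : Set (Fin n → ℝ), IsOpen U → (U ∩ K).Nonempty → 0 < μ U)
    (f : MvPolynomial (Fin n) ℝ)
    (xs : Fin n → ℝ) (hxs : xs ∈ K) (hmin : ∀ y ∈ K, eval xs f ≤ eval y f) :
    ∃ (σ : ℕ → MvPolynomial (Fin n) ℝ) (c : ℕ → ℝ),
      (∀ d, 0 ≤ c d) ∧ Filter.Tendsto c Filter.atTop (nhds 0) ∧
      ∀ d : ℕ, IsSOSUpTo n d (σ d) ∧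
        (∫ x, eval x (σ d) ∂μ) = 1 ∧
        (∫ x, eval x f * eval x (σ d) ∂μ) - eval xs f ≤ c d := by
  obtain ⟨B, hB⟩ := (hK.image (continuous_eval f)).bddAbove
  -- Adding `1` makes the scaling factor positive even when `f` is constant on `K`.
  obtain ⟨M, hMdef⟩ : ∃ M : ℝ, M = B - eval xs f + 1 := ⟨_, rfl⟩
  have hfB : ∀ y ∈ K, eval y f ≤ B := fun y hy => hB ⟨y, hy, rfl⟩
  have hM : 0 < M := by linarith [hfB xs hxs]
  let q : MvPolynomial (Fin n) ℝ := C (1 + eval xs f / M) - C M⁻¹ * f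
  let g : (Fin n → ℝ) → ℝ := fun x => (eval x f - eval xs f) / M
  have hq : ∀ x, eval x q = 1 - g x := by
    intro x
    simp only [q, g, map_sub, map_mul, eval_C]
    field_simp
    ring
  have hgc : Continuous g := ((continuous_eval f).sub continuous_const).div_const M
  have hint : ∀ {u : (Fin n → ℝ) → ℝ}, Continuous u → Integrable u μ := fun hu =>
    integrable_of_continuous_of_compl_null hK hsupp hu
  have haeK : ∀ᵐ x ∂μ, x ∈ K := mem_ae_iff.2 hsupp
  have h0 : ∀ᵐ x ∂μ, 0 ≤ g x := by
    filter_upwards [haeK] with x hx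
    exact div_nonneg (by linarith [hmin x hx]) hM.le
  have h1 : ∀ᵐ x ∂μ, g x ≤ 1 := by
    filter_upwards [haeK] with x hx
    exact (div_le_one hM).2 (by linarith [hfB x hx])
  have hi : ∀ N : ℕ, Integrable (fun x => (1 - g x) ^ N) μ := fun N => hint (by fun_prop)
  have hgi : ∀ N : ℕ, Integrable (fun x => g x * (1 - g x) ^ N) μ := fun N => hint (by fun_prop)
  have hp : ∀ ε : ℝ, 0 < ε → 0 < μ {x | g x < ε} := by
    intro ε hε
    refine hpos _ (isOpen_lt hgc continuous_const) ⟨xs, ?_, hxs⟩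
    simpa [g] using hε
  let k : ℕ → ℕ := fun d => d / (f.totalDegree + 1)
  let Z : ℕ → ℝ := fun d => ∫ x, (1 - g x) ^ (2 * k d) ∂μ
  have hZ : ∀ d, 0 < Z d := fun d => integral_pow_pos h1 hi hp _
  let r : ℕ → ℝ := fun N => (∫ x, g x * (1 - g x) ^ N ∂μ) / ∫ x, (1 - g x) ^ N ∂μ
  have hr : Filter.Tendsto r Filter.atTop (nhds 0) := tendsto_weighted_mean h0 h1 hi hgi hp
  have hev : ∀ d x, eval x ((C (Real.sqrt (Z d))⁻¹ * q ^ k d) ^ 2) =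
      (Z d)⁻¹ * (1 - g x) ^ (2 * k d) := by
    intro d x
    rw [map_pow, map_mul, eval_C, map_pow, hq, mul_pow, inv_pow, Real.sq_sqrt (hZ d).le, ← pow_mul,
      mul_comm (k d)]
  refine ⟨fun d => (C (Real.sqrt (Z d))⁻¹ * q ^ k d) ^ 2, fun d => M * r (2 * k d), ?_, ?_, ?_⟩
  · intro d
    refine mul_nonneg hM.le (div_nonneg (integral_nonneg_of_ae ?_) (hZ d).le)
    filter_upwards [h0, h1] with x hx hx'
    exact mul_nonneg hx (pow_nonneg (by linarith) _)
  · have hk : Filter.Tendsto (fun d => 2 * k d) Filter.atTop Filter.atTop :=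
      (Nat.tendsto_div_const_atTop (Nat.succ_ne_zero _)).const_mul_atTop' (by norm_num)
    simpa using (hr.comp hk).const_mul M
  · intro d
    have hone : (∫ x, (Z d)⁻¹ * (1 - g x) ^ (2 * k d) ∂μ) = 1 := by
      rw [integral_const_mul]
      exact inv_mul_cancel₀ (hZ d).ne'
    refine ⟨⟨1, fun _ => C (Real.sqrt (Z d))⁻¹ * q ^ k d, fun _ => ?_, by simp⟩, ?_, le_of_eq ?_⟩
    · have hqd : q.totalDegree ≤ f.totalDegree := by
        refine (totalDegree_sub _ _).trans (max_le (by rw [totalDegree_C]; exact Nat.zero_le _) ?_)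
        refine (totalDegree_mul _ _).trans (by simp)
      calc _ ≤ (C (Real.sqrt (Z d))⁻¹ : MvPolynomial (Fin n) ℝ).totalDegree +
            (q ^ k d).totalDegree := totalDegree_mul _ _
        _ ≤ 0 + k d * q.totalDegree := by
            gcongr
            · simp
            · exact totalDegree_pow _ _
        _ ≤ k d * (f.totalDegree + 1) := by
            rw [zero_add]
            exact Nat.mul_le_mul_left _ (by omega)
        _ ≤ d := Nat.div_mul_le_self _ _
    · simp only [hev]
      exact hone
    · simp only [hev]
      have hsplit : ∀ x, eval x f * ((Z d)⁻¹ * (1 - g x) ^ (2 * k d)) =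
          (M * (Z d)⁻¹) * (g x * (1 - g x) ^ (2 * k d)) +
            eval xs f * ((Z d)⁻¹ * (1 - g x) ^ (2 * k d)) := by
        intro x
        have hfg : eval x f = M * g x + eval xs f := by
          simp only [g]
          field_simp
          ring
        rw [hfg]
        ring
      simp only [hsplit]
      rw [integral_add ((hgi _).const_mul _) (((hi _).const_mul _).const_mul _),
        integral_const_mul, integral_const_mul (eval xs f), hone]
      simp only [r]
      change M * (Z d)⁻¹ * _ + eval xs f * 1 - eval xs f = M * (_ / Z d)
      ring
end

section
/- Let K ⊆ ℝ^n be a nonempty compact set equal to the closure of its interior, λ the restriction of Lebesgue measure to K, and for j = 1,…,N let f_j, g_j be real polynomials with g_j(x) > 0 on K; set ρ := min_{x∈K} Σ_{j=1}^N f_j(x)/g_j(x). Define γ_α := ∫_K Π_{j=1}^N (f_j(x)/g_j(x))^{α_j} dλ(x) for α ∈ ℕ^N, and for d ∈ ℕ let M_d(γ) and M_d^+(γ) be the real symmetric matrices indexed by multi-indices α ∈ ℕ^N with α_j ≤ d for all j, with entries M_d(γ)(α,β) := γ_{α+β} and M_d^+(γ)(α,β) := Σ_{j=1}^N γ_{α+β+e_j},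 where e_j is the j-th standard unit multi-index. Then for each d the set {a ∈ ℝ : M_d^+(γ) − a·M_d(γ) is positive semidefinite} is nonempty and bounded above; its supremum a_d^# satisfies a_d^# ≥ ρ; the sequence (a_d^#)_{d∈ℕ} is nonincreasing; and a_d^# → ρ as d → ∞. -/
open MeasureTheory MvPolynomial

/-!
Put `F j = f j / g j` and `s = ∑ j, F j`, continuous functions on `K`. The quadratic form of
`M_d⁺(γ) - a M_d(γ)` at a coefficient vector `c` is `∫_K (s - a) P(F)²`, where `P` is the polynomial
of degree at most `d` in each variable with coefficients `c` (`posSemidef_moment_iff`). All the claims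
follow from this formula:

* `a = ρ` gives a nonnegative integrand, so `ρ ∈ S d`; the entry at `(0, 0)` is
  `∫_K s - a vol(K)`, which bounds `S d` above.
* `S (d + 1) ⊆ S d`, since the matrix of order `d` is a principal submatrix of that of order `d + 1`.
* If `a > ρ`, then `a` fails to lie in some `S d`. Otherwise `0 ≤ ∫_K (s - a) p(s)²` for all
  univariate polynomials `p`, as `p(s)` is a polynomial in `F`. Letting `p` approximate
  `t ↦ max 0 (a - t)` uniformly on the range of `s` gives `∫_K (max 0 (a - s))³ ≤ 0`, whereas
  this integral is positive: `s < a` near a minimizer of `s`, hence on a nonempty open subset of `K`,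
  because the interior of `K` is dense in `K` (`le_of_forall_integral_polynomial_nonneg`).
  The form decreases in `a`, so each `S d` is downward closed; any number below the infimum of the
  suprema therefore lies in every `S d` and is at most `ρ`.
-/

/-- Lebesgue measure restricted to a regular closed set has full support: a nonnegative continuous
function that does not vanish identically has positive integral. -/
lemma setIntegral_pos_of_regular {n : ℕ} {K : Set (Fin n → ℝ)} (hK : IsCompact K)
    (hreg : K = closure (interior K)) {u : (Fin n → ℝ) → ℝ} (hu : ContinuousOn u K)
    (h0 : ∀ x ∈ K, 0 ≤ u x) {x₀ : Fin n → ℝ} (hx₀ : x₀ ∈ K) (hpos : 0 < u x₀) :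
    0 < ∫ x in K, u x := by
  have hae : 0 ≤ᵐ[volume.restrict K] u :=
    (ae_restrict_iff' hK.measurableSet).2 (Filter.Eventually.of_forall h0)
  rw [setIntegral_pos_iff_support_of_nonneg_ae hae (hu.integrableOn_compact hK)]
  have hev : ∀ᶠ x in nhdsWithin x₀ K, 0 < u x := (hu x₀ hx₀).eventually (lt_mem_nhds hpos)
  obtain ⟨U, hU, hxU, hUK⟩ := mem_nhdsWithin.1 hev
  have hne : (U ∩ interior K).Nonempty :=
    mem_closure_iff.1 (hreg ▸ hx₀) U hU hxU
  refine ((hU.inter isOpen_interior).measure_pos volume hne).trans_le (measure_mono ?_)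
  rintro x ⟨hx, hxK⟩
  exact ⟨(hUK ⟨hx, interior_subset hxK⟩ : 0 < u x).ne', interior_subset hxK⟩

/-- If `∫_K (s - a) p(s)² ≥ 0` for every univariate polynomial `p`, then `a ≤ s` on `K`: squares of
polynomials detect the sign of `s - a`. -/
lemma le_of_forall_integral_polynomial_nonneg {n : ℕ} {K : Set (Fin n → ℝ)} (hK : IsCompact K)
    (hreg : K = closure (interior K)) {s : (Fin n → ℝ) → ℝ} (hs : ContinuousOn s K) {a : ℝ}
    (h : ∀ p : Polynomial ℝ, 0 ≤ ∫ x in K, (s x - a) * p.eval (s x) ^ 2)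
    {x₀ : Fin n → ℝ} (hx₀ : x₀ ∈ K) : a ≤ s x₀ := by
  by_contra! hlt
  set u : (Fin n → ℝ) → ℝ := fun x => max 0 (a - s x) ^ 3 with hu
  have huc : ContinuousOn u K := (continuousOn_const.sup (continuousOn_const.sub hs)).pow 3
  have hI : 0 < ∫ x in K, u x :=
    setIntegral_pos_of_regular hK hreg huc (fun x _ => by positivity) hx₀
      (pow_pos (lt_max_of_lt_right (sub_pos.2 hlt)) 3)
  set I := ∫ x in K, u x
  obtain ⟨L, hL⟩ := hK.exists_bound_of_continuousOn (hs.sub (continuousOn_const (c := a)))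
  have hL0 : 0 ≤ L := (norm_nonneg _).trans (hL x₀ hx₀)
  set V := (volume : Measure (Fin n → ℝ)).real K with hV
  have hV0 : 0 ≤ V := measureReal_nonneg
  set C := L * (1 + 2 * L) * V with hC
  have hC0 : 0 ≤ C := by positivity
  set δ := min 1 (I / (C + 1)) with hδ
  have hδ0 : 0 < δ := lt_min one_pos (by positivity)
  have hδ1 : δ ≤ 1 := min_le_left _ _
  have hδI : C * δ < I := by
    have h1 : δ * (C + 1) ≤ I := (le_div_iff₀ (by positivity)).1 (min_le_right _ _)
    linarith
  obtain ⟨p, hp⟩ := exists_polynomial_near_of_continuousOn (a - L) (a + L)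
    (fun t => max 0 (a - t)) (by fun_prop) δ hδ0
  have hint : ∀ {w : (Fin n → ℝ) → ℝ}, ContinuousOn w K → IntegrableOn w K :=
    fun hw => hw.integrableOn_compact hK
  have hbound : ∀ x ∈ K,
      (s x - a) * p.eval (s x) ^ 2 ≤ L * (1 + 2 * L) * δ - u x := by
    intro x hx
    have hxL := hL x hx
    rw [Real.norm_eq_abs] at hxL
    obtain ⟨h1, h2⟩ := abs_le.1 hxL
    simp only [Pi.sub_apply] at h1 h2 hxL
    have hpx := hp (s x) ⟨by linarith, by linarith⟩
    set q := p.eval (s x)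
    set m := max 0 (a - s x) with hm
    have hm0 : 0 ≤ m := le_max_left _ _
    have hmL : m ≤ L := max_le hL0 (by linarith)
    have hsm : (s x - a) * m ^ 2 = - m ^ 3 := by
      rcases le_total 0 (a - s x) with h | h
      · rw [hm, max_eq_right h]; ring
      · rw [hm, max_eq_left h]; ring
    have habs : |(s x - a) * ((q - m) * (q + m))| ≤ L * (δ * (1 + 2 * L)) := by
      rw [abs_mul, abs_mul]
      have : |q + m| ≤ 1 + 2 * L := by
        rw [abs_le]; obtain ⟨h3, h4⟩ := abs_lt.1 hpx; constructor <;> linarith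
      gcongr
    have := (abs_le.1 habs).2
    have hux : u x = m ^ 3 := rfl
    rw [hux]
    nlinarith
  have hpc : ContinuousOn (fun x => (s x - a) * p.eval (s x) ^ 2) K :=
    (hs.sub continuousOn_const).mul ((p.continuous.comp_continuousOn hs).pow 2)
  have huc' : ContinuousOn (fun x => L * (1 + 2 * L) * δ - u x) K := continuousOn_const.sub huc
  have hle := setIntegral_mono_on (hint hpc) (hint huc') hK.measurableSet hbound
  rw [integral_sub (hint continuousOn_const) (hint huc), setIntegral_const, smul_eq_mul] at hle
  have := h p
  have hCe : V * (L * (1 + 2 * L) * δ) = C * δ := by rw [hC]; ring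
  linarith

/-- A polynomial is the combination of the monomials whose exponents are at most its total degree,
indexed by `Fin N → Fin (d + 1)`. -/
lemma eval_eq_sum_fin {N : ℕ} (P : MvPolynomial (Fin N) ℝ) :
    ∃ c : (Fin N → Fin (P.totalDegree + 1)) → ℝ, ∀ y : Fin N → ℝ,
      eval y P = ∑ α, c α * ∏ j, y j ^ (α j : ℕ) := by
  refine ⟨fun α => P.coeff (Finsupp.equivFunOnFinite.symm fun j => (α j : ℕ)), fun y => ?_⟩
  rw [eval_eq']
  have hlt : ∀ m ∈ P.support, ∀ j, m j < P.totalDegree + 1 := fun m hm j =>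
    Nat.lt_succ_of_le ((monomial_le_degreeOf j hm).trans (degreeOf_le_totalDegree P j))
  symm
  refine Finset.sum_bij_ne_zero (fun α _ _ => Finsupp.equivFunOnFinite.symm fun j => (α j : ℕ))
    ?_ ?_ ?_ ?_
  · intro α _ h
    exact mem_support_iff.2 (left_ne_zero_of_mul h)
  · intro α _ _ β _ _ h
    funext j
    exact Fin.ext (DFunLike.congr_fun h j)
  · intro m hm h
    have : (Finsupp.equivFunOnFinite.symm fun j => m j) = m := by ext; simp
    exact ⟨fun j => ⟨m j, hlt m hm j⟩, Finset.mem_univ _, by simpa [this] using h, this⟩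
  · intro α _ _
    simp

/-- The quadratic form of `M_d⁺(γ) - a M_d(γ)` at `c` is `∫_K (∑ j, F j - a) P(F)²`, where `P` is
the polynomial with coefficients `c`. -/
lemma posSemidef_moment_iff {n N : ℕ} {K : Set (Fin n → ℝ)} (hK : IsCompact K)
    {F : Fin N → (Fin n → ℝ) → ℝ} (hF : ∀ j, ContinuousOn (F j) K)
    {γ : (Fin N → ℕ) → ℝ} (hγ : ∀ α, γ α = ∫ x in K, ∏ j, F j x ^ α j) (d : ℕ) (a : ℝ) :
    ((Matrix.of fun α β : Fin N → Fin (d + 1) =>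
          ∑ j, γ fun k => (α k : ℕ) + (β k : ℕ) + if k = j then 1 else 0) -
       a • (Matrix.of fun α β : Fin N → Fin (d + 1) =>
          γ fun k => (α k : ℕ) + (β k : ℕ))).PosSemidef ↔
      ∀ c : (Fin N → Fin (d + 1)) → ℝ,
        0 ≤ ∫ x in K, (∑ j, F j x - a) * (∑ α, c α * ∏ j, F j x ^ (α j : ℕ)) ^ 2 := by
  have hint : ∀ {w : (Fin n → ℝ) → ℝ}, ContinuousOn w K → IntegrableOn w K :=
    fun hw => hw.integrableOn_compact hK
  have hmc : ∀ α : Fin N → ℕ, ContinuousOn (fun x => ∏ j, F j x ^ α j) K := fun α =>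
    continuousOn_finsetProd _ fun j _ => (hF j).pow _
  have hsc : ContinuousOn (fun x => ∑ j, F j x - a) K :=
    (continuousOn_finsetSum _ fun j _ => hF j).sub continuousOn_const
  set A := ((Matrix.of fun α β : Fin N → Fin (d + 1) =>
          ∑ j, γ fun k => (α k : ℕ) + (β k : ℕ) + if k = j then 1 else 0) -
       a • (Matrix.of fun α β : Fin N → Fin (d + 1) =>
          γ fun k => (α k : ℕ) + (β k : ℕ))) with hA
  have hentry : ∀ α β, A α β = ∫ x in K, (∑ j, F j x - a) *
      ((∏ j, F j x ^ (α j : ℕ)) * ∏ j, F j x ^ (β j : ℕ)) := by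
    intro α β
    simp only [hA, Matrix.sub_apply, Matrix.smul_apply, Matrix.of_apply, smul_eq_mul, hγ]
    have hac : ContinuousOn (fun x => a * ∏ j, F j x ^ ((α j : ℕ) + (β j : ℕ))) K :=
      continuousOn_const.mul (hmc _)
    rw [← integral_finsetSum _ fun j _ => hint (hmc _), ← integral_const_mul,
      ← integral_sub (hint (continuousOn_finsetSum _ fun j _ => hmc _))
        (hint hac)]
    refine integral_congr_ae (Filter.Eventually.of_forall fun x => ?_)
    simp only [pow_add, Finset.prod_mul_distrib, pow_ite, pow_one, pow_zero,
      Finset.prod_ite_eq', Finset.mem_univ, if_true]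
    rw [← Finset.mul_sum]
    ring
  have hquad : ∀ c : (Fin N → Fin (d + 1)) → ℝ, dotProduct (star c) (A.mulVec c) =
      ∫ x in K, (∑ j, F j x - a) * (∑ α, c α * ∏ j, F j x ^ (α j : ℕ)) ^ 2 := by
    intro c
    simp only [dotProduct, Matrix.mulVec, hentry, Finset.mul_sum, Pi.star_apply, star_trivial]
    simp only [← integral_mul_const, ← integral_const_mul]
    have hterm : ∀ α β : Fin N → Fin (d + 1), ContinuousOn (fun x => c α * ((∑ j, F j x - a) *
        ((∏ j, F j x ^ (α j : ℕ)) * ∏ j, F j x ^ (β j : ℕ)) * c β)) K := fun α β =>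
      continuousOn_const.mul ((hsc.mul ((hmc _).mul (hmc _))).mul continuousOn_const)
    simp_rw [← integral_finsetSum _ fun j _ => hint (hterm _ j)]
    rw [← integral_finsetSum _ fun j _ => hint (continuousOn_finsetSum _ fun i _ => hterm j i)]
    refine integral_congr_ae (Filter.Eventually.of_forall fun x => ?_)
    simp only [sq, Finset.sum_mul_sum]
    rw [Finset.mul_sum]
    refine Finset.sum_congr rfl fun α _ => ?_
    rw [Finset.mul_sum]
    refine Finset.sum_congr rfl fun β _ => ?_
    ring
  constructor
  · intro h c
    rw [← hquad]
    exact h.dotProduct_mulVec_nonneg c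
  · intro h
    refine .of_dotProduct_mulVec_nonneg ?_ fun c => hquad c ▸ h c
    ext α β
    rw [Matrix.conjTranspose_apply, star_trivial, hentry, hentry]
    simp only [mul_comm]

/-- Let `K ⊆ ℝ^n` be a nonempty compact set equal to the closure of its
interior, `λ` Lebesgue measure restricted to `K`, and `f_j, g_j` polynomials with `g_j > 0`
on `K`; set `ρ := min_K Σ_j f_j/g_j`. With the pushforward moments
`γ_α = ∫_K Π_j (f_j/g_j)^{α_j} dλ` (`α ∈ ℕ^N`) and the matrices (indexed by multi-indices
`α` with `α_j ≤ d`, encoded as `α : Fin N → Fin (d+1)`) `M_d(γ)(α,β) = γ_{α+β}` and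
`M_d⁺(γ)(α,β) = Σ_j γ_{α+β+e_j}`, the set `{a : M_d⁺(γ) − a M_d(γ) ⪰ 0}` is nonempty and
bounded above, its supremum `a_d^#` satisfies `a_d^# ≥ ρ`, the sequence is nonincreasing,
and `a_d^# → ρ`. -/
theorem stmt_15 (n N : ℕ) (K : Set (Fin n → ℝ)) (hK : IsCompact K) (hKne : K.Nonempty)
    (hreg : K = closure (interior K))
    (f g : Fin N → MvPolynomial (Fin n) ℝ)
    (hg : ∀ j, ∀ x ∈ K, 0 < eval x (g j))
    (ρ : ℝ)
    (hρ : IsLeast ((fun x => ∑ j, eval x (f j) / eval x (g j)) '' K) ρ)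
    (γ : (Fin N → ℕ) → ℝ)
    (hγ : ∀ α, γ α = ∫ x in K, ∏ j, (eval x (f j) / eval x (g j)) ^ α j)
    (S : ℕ → Set ℝ)
    (hS : S = fun d => {a : ℝ |
      ((Matrix.of fun α β : Fin N → Fin (d + 1) =>
          ∑ j, γ fun k => (α k : ℕ) + (β k : ℕ) + if k = j then 1 else 0) -
       a • (Matrix.of fun α β : Fin N → Fin (d + 1) =>
          γ fun k => (α k : ℕ) + (β k : ℕ))).PosSemidef}) :
    (∀ d, (S d).Nonempty ∧ BddAbove (S d)) ∧
    (∀ d, ρ ≤ sSup (S d)) ∧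
    (Antitone fun d => sSup (S d)) ∧
    Filter.Tendsto (fun d => sSup (S d)) Filter.atTop (nhds ρ) := by
  set F : Fin N → (Fin n → ℝ) → ℝ := fun j x => eval x (f j) / eval x (g j) with hFdef
  have hF : ∀ j, ContinuousOn (F j) K := fun j =>
    (f j).continuous_eval.continuousOn.div (g j).continuous_eval.continuousOn
      fun x hx => (hg j x hx).ne'
  have hs : ContinuousOn (fun x => ∑ j, F j x) K := continuousOn_finsetSum _ fun j _ => hF j
  have hmem : ∀ d a, a ∈ S d ↔ ∀ c : (Fin N → Fin (d + 1)) → ℝ,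
      0 ≤ ∫ x in K, (∑ j, F j x - a) * (∑ α, c α * ∏ j, F j x ^ (α j : ℕ)) ^ 2 := by
    intro d a
    rw [hS]
    exact posSemidef_moment_iff hK hF hγ d a
  have hρS : ∀ d, ρ ∈ S d := fun d => (hmem d ρ).2 fun c =>
    setIntegral_nonneg hK.measurableSet fun x hx =>
      mul_nonneg (sub_nonneg.2 (hρ.2 ⟨x, hx, rfl⟩)) (sq_nonneg _)
  have hanti : ∀ d e, d ≤ e → S e ⊆ S d := by
    intro d e hde a ha
    rw [hS] at ha ⊢
    exact Matrix.PosSemidef.submatrix ha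
      fun (α : Fin N → Fin (d + 1)) j => Fin.castLE (Nat.succ_le_succ hde) (α j)
  have hbdd : ∀ d, BddAbove (S d) := by
    intro d
    obtain ⟨x₀, hx₀⟩ := hKne
    have hV : 0 < ∫ x in K, (1 : ℝ) :=
      setIntegral_pos_of_regular hK hreg continuousOn_const (fun _ _ => zero_le_one) hx₀ one_pos
    refine ⟨(∫ x in K, ∑ j, F j x) / ∫ x in K, (1 : ℝ), fun a ha => ?_⟩
    have h := (hmem d a).1 ha (Pi.single 0 1)
    have hone : ∀ x, ∑ α : Fin N → Fin (d + 1),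
        (Pi.single 0 1 : (Fin N → Fin (d + 1)) → ℝ) α * ∏ j, F j x ^ (α j : ℕ) = 1 := by
      intro x
      rw [Finset.sum_eq_single 0 (fun α _ hα => by simp [hα]) (by simp)]
      simp
    simp only [hone, one_pow, mul_one] at h
    rw [integral_sub (hs.integrableOn_compact hK) (continuousOn_const.integrableOn_compact hK)]
      at h
    rw [le_div_iff₀ hV, ← integral_const_mul]
    simpa using h
  have hdown : ∀ d {a b}, a ∈ S d → b ≤ a → b ∈ S d := by
    intro d a b ha hba
    refine (hmem d b).2 fun c => ((hmem d a).1 ha c).trans ?_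
    have hc : ∀ t : ℝ, IntegrableOn (fun x => (∑ j, F j x - t) *
        (∑ α, c α * ∏ j, F j x ^ (α j : ℕ)) ^ 2) K := fun t =>
      ((hs.sub continuousOn_const).mul ((continuousOn_finsetSum _ fun α _ =>
        continuousOn_const.mul (continuousOn_finsetProd _ fun j _ => (hF j).pow _)).pow
          2)).integrableOn_compact hK
    exact setIntegral_mono_on (hc a) (hc b) hK.measurableSet fun x _ => by gcongr
  have hle : ∀ d, ρ ≤ sSup (S d) := fun d => le_csSup (hbdd d) (hρS d)
  have hmono : Antitone fun d => sSup (S d) := fun d e hde =>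
    csSup_le_csSup (hbdd d) ⟨ρ, hρS e⟩ (hanti d e hde)
  -- A number lying in every `S d` is a lower bound of `∑ j, F j` on `K`.
  have hall : ∀ a, (∀ d, a ∈ S d) → a ≤ ρ := by
    intro a ha
    obtain ⟨x₀, hx₀, hx₀ρ⟩ := hρ.1
    rw [← hx₀ρ]
    refine le_of_forall_integral_polynomial_nonneg hK hreg hs (fun p => ?_) hx₀
    obtain ⟨c, hc⟩ := eval_eq_sum_fin
      (Polynomial.aeval (∑ j, X j : MvPolynomial (Fin N) ℝ) p)
    have hev : ∀ y : Fin N → ℝ, eval y (Polynomial.aeval (∑ j, X j : MvPolynomial (Fin N) ℝ) p) =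
        p.eval (∑ j, y j) := by
      intro y
      have := Polynomial.aeval_algHom_apply (MvPolynomial.aeval y : _ →ₐ[ℝ] ℝ)
        (∑ j, X j : MvPolynomial (Fin N) ℝ) p
      simpa [MvPolynomial.aeval_eq_eval] using this.symm
    have h := (hmem _ a).1 (ha _) c
    have hcx : ∀ x, ∑ α, c α * ∏ j, F j x ^ (α j : ℕ) = p.eval (∑ j, F j x) := fun x =>
      (hc fun j => F j x).symm.trans (hev _)
    simpa only [hcx] using h
  refine ⟨fun d => ⟨⟨ρ, hρS d⟩, hbdd d⟩, hle, hmono, ?_⟩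
  have hinf : ⨅ d, sSup (S d) = ρ := by
    have hb : BddBelow (Set.range fun d => sSup (S d)) := ⟨ρ, by rintro _ ⟨d, rfl⟩; exact hle d⟩
    refine le_antisymm (le_of_forall_lt_imp_le_of_dense fun b hbi => hall b fun d => ?_)
      (le_ciInf hle)
    obtain ⟨a, ha, hba⟩ := exists_lt_of_lt_csSup ⟨ρ, hρS d⟩ (hbi.trans_le (ciInf_le hb d))
    exact hdown d ha hba.le
  rw [← hinf]
  exact tendsto_atTop_ciInf hmono ⟨ρ, by rintro _ ⟨d, rfl⟩; exact hle d⟩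
end
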